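/- Let f define a free arrangement of d ≥ 3 lines and one smooth conic in P²(ℂ) all of whose singularities are ordinary of multiplicity < 5. Then mdr(f) ∈ {⌈(d−2)/2⌉, ⌊(d+1)/2⌋}. -/

import Mathlib

open MvPolynomial Finset
open scoped Classical

/-- The Jacobian ideal of `f`. -/
noncomputable def jacobianIdeal (f : MvPolynomial (Fin 3) ℂ) :
    Ideal (MvPolynomial (Fin 3) ℂ) :=
  Ideal.span {pderiv 0 f, pderiv 1 f, pderiv 2 f}

/-- The minimal degree of a nontrivial Jacobian relation of `f`. -/
noncomputable def mdr (f : MvPolynomial (Fin 3) ℂ) : ℕ :=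
  sInf {r : ℕ | ∃ a b c : MvPolynomial (Fin 3) ℂ,
    a.IsHomogeneous r ∧ b.IsHomogeneous r ∧ c.IsHomogeneous r ∧
    ¬(a = 0 ∧ b = 0 ∧ c = 0) ∧
    a * pderiv 0 f + b * pderiv 1 f + c * pderiv 2 f = 0}

/-!
Write `N` for the degree of the curve `f = 0`.

Lower bound. Let `a` be a homogeneous vector field of degree `r` with `a · ∇f = 0`. The divergence
theorem on `ℂ³`, applied to the part of `a` orthogonal to the radial field with the weight
`conj (div a) (|f|² + ε)^(-s)` and a cutoff in `|z|²`, where `s N = r + 2`, expresses the weighted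
`L²`-norm of `div a` by a term which tends to `0` with `ε` as soon as `|f|^(-2s)` times the field is
locally integrable away from the origin. If at most `m` branches meet at a point and
`m (r + 2) < 2 N`, this holds, and so `div a = 0`. At a point on at least three branches the
Jacobian matrix of `a` acts as a scalar modulo the radial direction; comparing its trace `0` with
the cofactors of `a` on the components, which sum to `0`, shows that `a` vanishes there. This gain
makes the argument apply also to the fields `X j • a`, whose divergence is `a j`, and so `a = 0`.

Upper bound. A linear form `h` is a nonzerodivisor modulo the saturated ideal of the partial
derivatives of `f`. In the plane `h = 0` a dimension count yields a combination of the partial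
derivatives which is divisible by `h`; dividing by `h` and using saturation gives a syzygy of degree
`⌊(N - 1) / 2⌋`.
-/

section Gradient

variable {R σ : Type*} [CommRing R]

/-- The gradient of a polynomial at a point, as the vector of its partial derivatives. -/
noncomputable def gradAt (P : MvPolynomial σ R) (z : σ → R) : σ → R :=
  fun i => eval z (pderiv i P)

lemma gradAt_mul (P Q : MvPolynomial σ R) (z : σ → R) :
    gradAt (P * Q) z = eval z P • gradAt Q z + eval z Q • gradAt P z := by
  ext i
  simp only [gradAt, pderiv_mul, map_add, map_mul, Pi.add_apply, Pi.smul_apply, smul_eq_mul]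
  ring

lemma pderiv_pderiv_comm (i j : σ) (P : MvPolynomial σ R) :
    pderiv i (pderiv j P) = pderiv j (pderiv i P) := by
  ext m
  simp only [coeff_pderiv, Finsupp.add_apply]
  rcases eq_or_ne i j with rfl | h
  · rfl
  · rw [add_right_comm]
    simp only [Finsupp.single_apply, h, h.symm, if_false, add_zero]
    ring

lemma eval_smul_of_isHomogeneous {P : MvPolynomial σ R} {n : ℕ} (hP : P.IsHomogeneous n)
    (c : R) (z : σ → R) : eval (c • z) P = c ^ n * eval z P := by
  rw [eval_eq, eval_eq, Finset.mul_sum]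
  refine Finset.sum_congr rfl fun d hd => ?_
  have hdeg : ∑ i ∈ d.support, d i = n := by
    simpa [Finsupp.weight_apply, Finsupp.sum] using hP (mem_support_iff.1 hd)
  simp only [Pi.smul_apply, smul_eq_mul, mul_pow, Finset.prod_mul_distrib,
    Finset.prod_pow_eq_pow_sum, hdeg]
  ring

lemma dotProduct_gradAt_self [Fintype σ] {P : MvPolynomial σ R} {n : ℕ} (hP : P.IsHomogeneous n)
    (z : σ → R) : z ⬝ᵥ gradAt P z = n * eval z P := by
  simpa [dotProduct, gradAt] using congrArg (eval z) hP.sum_X_mul_pderiv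

end Gradient

section LinearForm

variable {R σ : Type*} [CommRing R] [Fintype σ]

/-- The linear form `∑ vᵢ Xᵢ`. -/
noncomputable def linearForm (v : σ → R) : MvPolynomial σ R := ∑ i, C (v i) * X i

lemma isHomogeneous_linearForm (v : σ → R) : (linearForm v).IsHomogeneous 1 :=
  IsHomogeneous.sum _ _ _ fun i _ => by
    simpa using (isHomogeneous_C σ (v i)).mul (isHomogeneous_X R i)

lemma gradAt_linearForm (v z : σ → R) : gradAt (linearForm v) z = v := by
  ext i
  simp [gradAt, linearForm, pderiv_X, Pi.single_apply]

lemma eq_linearForm_gradAt {P : MvPolynomial σ R} (hP : P.IsHomogeneous 1) (z : σ → R) :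
    P = linearForm (gradAt P z) := by
  have hderiv (i) : pderiv i P = C (eval z (pderiv i P)) := by
    have hconst := (hP.pderiv (i := i)).totalDegree_le
    rw [totalDegree_eq_zero_iff_eq_C.1 (Nat.le_zero.1 hconst)]
    simp
  have hEuler := hP.sum_X_mul_pderiv
  rw [one_smul] at hEuler
  rw [← hEuler]
  refine Finset.sum_congr rfl fun i _ => ?_
  rw [hEuler, hderiv i, mul_comm]
  simp [gradAt]

end LinearForm

section Derivative

variable {σ : Type*} [Fintype σ]

lemma contDiff_normSq {n : WithTop ℕ∞} : ContDiff ℝ n Complex.normSq := by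
  simpa only [← Complex.normSq_eq_norm_sq] using contDiff_norm_sq ℝ (E := ℂ)

/-- The differential of a complex polynomial at a point. -/
noncomputable def diffAt (P : MvPolynomial σ ℂ) (z : σ → ℂ) : (σ → ℂ) →L[ℂ] ℂ :=
  ∑ i, gradAt P z i • ContinuousLinearMap.proj i

lemma diffAt_apply (P : MvPolynomial σ ℂ) (z v : σ → ℂ) : diffAt P z v = gradAt P z ⬝ᵥ v := by
  simp [diffAt, dotProduct]

lemma hasStrictFDerivAt_eval (P : MvPolynomial σ ℂ) (z : σ → ℂ) :
    HasStrictFDerivAt (fun w => eval w P) (diffAt P z) z := by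
  induction P using MvPolynomial.induction_on with
  | C c =>
    have hzero : diffAt (C c) z = 0 := by ext v; simp [diffAt_apply, gradAt, dotProduct]
    simpa [hzero] using hasStrictFDerivAt_const c z
  | add P Q hP hQ =>
    have hadd : diffAt (P + Q) z = diffAt P z + diffAt Q z := by
      ext v
      simp [diffAt_apply, gradAt, dotProduct, add_mul, Finset.sum_add_distrib]
    simp only [map_add, hadd]
    exact hP.fun_add hQ
  | mul_X P j hP =>
    have hX : HasStrictFDerivAt (fun w : σ → ℂ => w j)
        (ContinuousLinearMap.proj (R := ℂ) (φ := fun _ => ℂ) j) z :=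
      (ContinuousLinearMap.proj (R := ℂ) (φ := fun _ => ℂ) j).hasStrictFDerivAt
    have hmul : diffAt (P * X j) z = eval z P • ContinuousLinearMap.proj j + z j • diffAt P z := by
      ext v
      simp only [diffAt_apply, gradAt_mul, add_dotProduct, smul_dotProduct, smul_eq_mul,
        add_apply, smul_apply, ContinuousLinearMap.proj_apply, eval_X]
      simp [dotProduct, gradAt, pderiv_X, Pi.single_apply]
    simp only [map_mul, eval_X, hmul]
    exact hP.fun_mul hX

lemma contDiff_eval_left (P : MvPolynomial σ ℂ) (n : ℕ∞) :
    ContDiff ℝ n fun z : σ → ℂ => eval z P := by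
  have hanalytic : AnalyticOnNhd ℂ (fun z : σ → ℂ => eval z P) Set.univ := by
    simpa using AnalyticOnNhd.eval_mvPolynomial (𝕜 := ℂ) P
  exact (contDiffOn_univ.1 (hanalytic.contDiffOn (n := n) uniqueDiffOn_univ)).restrict_scalars ℝ

open Topology in
lemma eq_zero_of_eventually_eval_eq_zero {σ : Type*} [Finite σ]
    {P : MvPolynomial σ ℂ} {p : σ → ℂ}
    (hP : ∀ᶠ z in 𝓝 p, eval z P = 0) : P = 0 := by
  cases nonempty_fintype σ
  obtain ⟨r, hr, hball⟩ := Metric.eventually_nhds_iff_ball.1 hP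
  refine MvPolynomial.funext_set (fun i => Metric.ball (p i) r)
    (fun i => infinite_of_mem_nhds (p i) (Metric.ball_mem_nhds _ hr)) fun z hz => ?_
  rw [map_zero]
  exact hball z (by rw [ball_pi p hr]; exact hz)

end Derivative

section LocalFiniteness

open MeasureTheory Topology ENNReal

variable {α : Type*} [TopologicalSpace α] [MeasureSpace α]

/-- The integral of `F` over some neighbourhood of `p` is finite. -/
def FiniteLIntegralAt (F : α → ℝ≥0∞) (p : α) : Prop :=
  ∃ U ∈ 𝓝 p, ∫⁻ z in U, F z < ∞

namespace FiniteLIntegralAt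

variable {F G : α → ℝ≥0∞} {p : α}

lemma mono [OpensMeasurableSpace α] (hG : FiniteLIntegralAt G p)
    (hFG : ∀ᶠ z in 𝓝 p, F z ≤ G z) : FiniteLIntegralAt F p := by
  obtain ⟨U, hU, hfin⟩ := hG
  obtain ⟨W, hW, hWo, hpW⟩ := mem_nhds_iff.1 (Filter.inter_mem hU hFG)
  refine ⟨W, hWo.mem_nhds hpW, lt_of_le_of_lt ?_ hfin⟩
  calc ∫⁻ z in W, F z ≤ ∫⁻ z in W, G z :=
        setLIntegral_mono' hWo.measurableSet fun z hz => (hW hz).2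
    _ ≤ ∫⁻ z in U, G z := lintegral_mono_set fun z hz => (hW hz).1

lemma const_mul (hF : FiniteLIntegralAt F p) {c : ℝ≥0∞} (hc : c ≠ ∞) :
    FiniteLIntegralAt (fun z => c * F z) p := by
  obtain ⟨U, hU, hfin⟩ := hF
  refine ⟨U, hU, ?_⟩
  rw [lintegral_const_mul' _ _ hc]
  exact ENNReal.mul_lt_top hc.lt_top hfin

lemma sum [IsLocallyFiniteMeasure (volume : Measure α)] {κ : Type*} (s : Finset κ)
    {F : κ → α → ℝ≥0∞} (hF : ∀ i ∈ s, FiniteLIntegralAt (F i) p)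
    (hmeas : ∀ i ∈ s, Measurable (F i)) :
    FiniteLIntegralAt (fun z => ∑ i ∈ s, F i z) p := by
  choose! U hU hfin using hF
  refine ⟨⋂ i ∈ s, U i, (Filter.biInter_finset_mem s).2 hU, ?_⟩
  rw [lintegral_finsetSum _ hmeas]
  exact ENNReal.sum_lt_top.2 fun i hi =>
    (lintegral_mono_set (Set.biInter_subset_of_mem hi)).trans_lt (hfin i hi)

end FiniteLIntegralAt

lemma setLIntegral_lt_top_of_finiteLIntegralAt {F : α → ℝ≥0∞} {K : Set α} (hK : IsCompact K)
    (hF : ∀ p ∈ K, FiniteLIntegralAt F p) : ∫⁻ z in K, F z < ∞ := by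
  refine hK.induction_on (p := fun s => ∫⁻ z in s, F z < ∞) (by simp) ?_ ?_ ?_
  · exact fun s t hst ht => (lintegral_mono_set hst).trans_lt ht
  · exact fun s t hs ht =>
      (lintegral_union_le _ _ _).trans_lt (ENNReal.add_lt_top.2 ⟨hs, ht⟩)
  · intro p hp
    obtain ⟨U, hU, hfin⟩ := hF p hp
    exact ⟨U, mem_nhdsWithin_of_mem_nhds hU, hfin⟩

end LocalFiniteness

section Wirtinger

open MeasureTheory ComplexConjugate Complex

variable {ι : Type*} [Fintype ι] [DecidableEq ι] {F G : (ι → ℂ) → ℂ} {u v z : ι → ℂ}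

/-- `F` is real differentiable at `z`, and its holomorphic partial derivatives
`∂F/∂zᵢ = (∂F/∂xᵢ - I ∂F/∂yᵢ) / 2` form the vector `w`. -/
def HasWirtingerGradAt (F : (ι → ℂ) → ℂ) (w z : ι → ℂ) : Prop :=
  ∃ F' : (ι → ℂ) →L[ℝ] ℂ, HasFDerivAt F F' z ∧
    ∀ i, F' (Pi.single i 1) - I * F' (Pi.single i I) = 2 * w i

namespace HasWirtingerGradAt

lemma of_hasFDerivAt {F' : (ι → ℂ) →L[ℂ] ℂ} (hF : HasFDerivAt F F' z) :
    HasWirtingerGradAt F (fun i => F' (Pi.single i 1)) z := by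
  refine ⟨F'.restrictScalars ℝ, hF.restrictScalars ℝ, fun i => ?_⟩
  have hI : Pi.single i I = I • (Pi.single i 1 : ι → ℂ) := by rw [← Pi.single_smul]; simp
  simp only [ContinuousLinearMap.coe_restrictScalars', hI, map_smul, smul_eq_mul, ← mul_assoc,
    I_mul_I]
  ring

lemma conj_of_hasFDerivAt {F' : (ι → ℂ) →L[ℂ] ℂ} (hF : HasFDerivAt F F' z) :
    HasWirtingerGradAt (fun z => conj (F z)) 0 z := by
  refine ⟨conjCLE.toContinuousLinearMap ∘L F'.restrictScalars ℝ,
    conjCLE.hasFDerivAt.comp z (hF.restrictScalars ℝ), fun i => ?_⟩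
  have hI : Pi.single i I = I • (Pi.single i 1 : ι → ℂ) := by rw [← Pi.single_smul]; simp
  simp only [ContinuousLinearMap.comp_apply, ContinuousLinearMap.coe_restrictScalars', hI,
    map_smul, smul_eq_mul, Pi.zero_apply]
  simp [← mul_assoc]

lemma sub (hF : HasWirtingerGradAt F u z) (hG : HasWirtingerGradAt G v z) :
    HasWirtingerGradAt (fun z => F z - G z) (u - v) z := by
  obtain ⟨F', hF', hu⟩ := hF
  obtain ⟨G', hG', hv⟩ := hG
  refine ⟨F' - G', hF'.fun_sub hG', fun i => ?_⟩
  simp only [sub_apply, Pi.sub_apply]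
  linear_combination hu i - hv i

lemma mul (hF : HasWirtingerGradAt F u z) (hG : HasWirtingerGradAt G v z) :
    HasWirtingerGradAt (fun z => F z * G z) (F z • v + G z • u) z := by
  obtain ⟨F', hF', hu⟩ := hF
  obtain ⟨G', hG', hv⟩ := hG
  refine ⟨F z • G' + G z • F', hF'.fun_mul hG', fun i => ?_⟩
  simp only [add_apply, smul_apply, Pi.add_apply, Pi.smul_apply, smul_eq_mul]
  linear_combination G z * hu i + F z * hv i

lemma sum {κ : Type*} {s : Finset κ} {F : κ → (ι → ℂ) → ℂ} {w : κ → ι → ℂ}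
    (hF : ∀ j ∈ s, HasWirtingerGradAt (F j) (w j) z) :
    HasWirtingerGradAt (fun z => ∑ j ∈ s, F j z) (∑ j ∈ s, w j) z := by
  choose! F' hF' hw using hF
  refine ⟨∑ j ∈ s, F' j, HasFDerivAt.fun_sum hF', fun i => ?_⟩
  simp only [_root_.sum_apply, Finset.sum_apply, Finset.mul_sum,
    ← Finset.sum_sub_distrib]
  exact Finset.sum_congr rfl fun j hj => by rw [← hw j hj i]

lemma comp_real {r : (ι → ℂ) → ℝ} (hr : HasWirtingerGradAt (fun z => (r z : ℂ)) u z)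
    {φ : ℝ → ℝ} {φ' : ℝ} (hφ : HasDerivAt φ φ' (r z)) :
    HasWirtingerGradAt (fun z => (φ (r z) : ℂ)) ((φ' : ℂ) • u) z := by
  obtain ⟨F', hF', hu⟩ := hr
  have hre : HasFDerivAt r (reCLM ∘L F') z := by
    simpa [Function.comp_def] using reCLM.hasFDerivAt.comp z hF'
  have hreal (v) : F' v = ((F' v).re : ℂ) := by
    conv_lhs => rw [hF'.unique (ofRealCLM.hasFDerivAt.comp z hre)]
    rfl
  refine ⟨_, ofRealCLM.hasFDerivAt.comp z (hφ.comp_hasFDerivAt z hre), fun i => ?_⟩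
  have hui := hu i
  rw [hreal (Pi.single i 1), hreal (Pi.single i I)] at hui
  simp only [ContinuousLinearMap.comp_apply, smul_apply, Pi.smul_apply, smul_eq_mul,
    ofRealCLM_apply, reCLM_apply, ofReal_mul]
  linear_combination (φ' : ℂ) * hui

lemma mvPolynomial_eval (P : MvPolynomial ι ℂ) (z : ι → ℂ) :
    HasWirtingerGradAt (fun z => eval z P) (gradAt P z) z := by
  convert of_hasFDerivAt (hasStrictFDerivAt_eval P z).hasFDerivAt using 1
  ext i
  simp [diffAt_apply]

lemma conj_eval (P : MvPolynomial ι ℂ) (z : ι → ℂ) :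
    HasWirtingerGradAt (fun z => conj (eval z P)) 0 z :=
  conj_of_hasFDerivAt (hasStrictFDerivAt_eval P z).hasFDerivAt

lemma normSq_eval (P : MvPolynomial ι ℂ) (z : ι → ℂ) :
    HasWirtingerGradAt (fun z => (normSq (eval z P) : ℂ))
      (conj (eval z P) • gradAt P z) z := by
  simpa only [← mul_conj, smul_zero, zero_add] using (mvPolynomial_eval P z).mul (conj_eval P z)

lemma coord (i : ι) (z : ι → ℂ) : HasWirtingerGradAt (fun z => z i) (Pi.single i 1) z := by
  convert mvPolynomial_eval (X i) z using 1
  · simp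
  · ext j
    rcases eq_or_ne j i with rfl | h <;> simp [gradAt, pderiv_X, *]

lemma conj_coord (i : ι) (z : ι → ℂ) : HasWirtingerGradAt (fun z => conj (z i)) 0 z := by
  simpa using conj_eval (X i) z

end HasWirtingerGradAt

/-- The vector field `Y` has complex divergence `∑ᵢ ∂Yᵢ/∂zᵢ = d` at `z`. -/
def HasWirtingerDivAt (Y : ι → (ι → ℂ) → ℂ) (d : ℂ) (z : ι → ℂ) : Prop :=
  ∃ w : ι → ι → ℂ, (∀ i, HasWirtingerGradAt (Y i) (w i) z) ∧ ∑ i, w i i = d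

lemma HasWirtingerDivAt.mul_left {Y : ι → (ι → ℂ) → ℂ} {d : ℂ}
    (hF : HasWirtingerGradAt F u z) (hY : HasWirtingerDivAt Y d z) :
    HasWirtingerDivAt (fun i z => F z * Y i z) (F z * d + u ⬝ᵥ fun i => Y i z) z := by
  obtain ⟨w, hw, rfl⟩ := hY
  refine ⟨_, fun i => hF.mul (hw i), ?_⟩
  simp only [Pi.add_apply, Pi.smul_apply, smul_eq_mul, Finset.sum_add_distrib, dotProduct,
    Finset.mul_sum]
  exact congrArg _ (Finset.sum_congr rfl fun i _ => mul_comm _ _)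

lemma integral_fderiv_apply_eq_zero {E : Type*} [NormedAddCommGroup E] [NormedSpace ℝ E]
    [FiniteDimensional ℝ E] [MeasurableSpace E] [BorelSpace E] {μ : Measure E}
    [μ.IsAddHaarMeasure] {Y : E → ℂ} (hY : ContDiff ℝ 1 Y) (hc : HasCompactSupport Y) (v : E) :
    Integrable (fun z => fderiv ℝ Y z v) μ ∧ ∫ z, fderiv ℝ Y z v ∂μ = 0 := by
  have hcont : Continuous (fun z => fderiv ℝ Y z v) :=
    (hY.continuous_fderiv one_ne_zero).clm_apply continuous_const
  have hint : Integrable (fun z => fderiv ℝ Y z v) μ :=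
    hcont.integrable_of_hasCompactSupport
      ((hc.fderiv (𝕜 := ℝ)).comp_left (g := fun L : E →L[ℝ] ℂ => L v) (by simp))
  refine ⟨hint, ?_⟩
  simpa using integral_mul_fderiv_eq_neg_fderiv_mul_of_integrable (μ := μ)
    (f := fun _ => (1 : ℂ)) (g := Y) (v := v) (by simp) (by simpa using hint)
    (by simpa using hY.continuous.integrable_of_hasCompactSupport hc)
    (fun _ _ => differentiableAt_const _) (fun x _ => hY.differentiable one_ne_zero x)

lemma integral_wirtingerDiv_eq_zero {Y : ι → (ι → ℂ) → ℂ} {d : (ι → ℂ) → ℂ}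
    (hY : ∀ i, ContDiff ℝ 1 (Y i)) (hc : ∀ i, HasCompactSupport (Y i))
    (hd : ∀ z, HasWirtingerDivAt Y (d z) z) : ∫ z, d z = 0 := by
  have hdiv (z) : d z = ∑ i, (1 / 2 : ℂ) *
      (fderiv ℝ (Y i) z (Pi.single i 1) - I * fderiv ℝ (Y i) z (Pi.single i I)) := by
    obtain ⟨w, hw, hsum⟩ := hd z
    rw [← hsum]
    refine Finset.sum_congr rfl fun i _ => ?_
    obtain ⟨F', hF', hF'w⟩ := hw i
    rw [hF'.fderiv, hF'w i]
    ring
  have hzero (i) (v : ι → ℂ) := integral_fderiv_apply_eq_zero (μ := volume) (hY i) (hc i) v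
  simp only [hdiv]
  rw [integral_finsetSum]
  swap
  · exact fun i _ => ((hzero i _).1.sub ((hzero i _).1.const_mul I)).const_mul _
  refine Finset.sum_eq_zero fun i _ => ?_
  rw [integral_const_mul, integral_sub (hzero i _).1 ((hzero i _).1.const_mul I),
    integral_const_mul, (hzero i _).2, (hzero i _).2]
  simp

end Wirtinger

section RadiusSq

open Complex ComplexConjugate

variable {ι : Type*} [Fintype ι]

/-- The square of the Euclidean norm on `ℂ^ι`. -/
noncomputable def radiusSq (z : ι → ℂ) : ℝ := ∑ i, normSq (z i)

lemma ofReal_radiusSq (z : ι → ℂ) : (radiusSq z : ℂ) = ∑ i, z i * conj (z i) := by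
  simp [radiusSq, mul_conj]

lemma radiusSq_nonneg (z : ι → ℂ) : 0 ≤ radiusSq z :=
  Finset.sum_nonneg fun _ _ => normSq_nonneg _

lemma norm_sq_le_radiusSq (z : ι → ℂ) : ‖z‖ ^ 2 ≤ radiusSq z := by
  rw [← Real.le_sqrt (norm_nonneg _) (radiusSq_nonneg z),
    pi_norm_le_iff_of_nonneg (Real.sqrt_nonneg _)]
  intro i
  rw [Real.le_sqrt (norm_nonneg _) (radiusSq_nonneg z), ← normSq_eq_norm_sq]
  exact Finset.single_le_sum (f := fun i => normSq (z i)) (fun _ _ => normSq_nonneg _)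
    (Finset.mem_univ i)

lemma contDiff_radiusSq {n : ℕ∞} : ContDiff ℝ n (radiusSq : (ι → ℂ) → ℝ) := by
  exact ContDiff.sum fun i _ => contDiff_normSq.comp (contDiff_apply ℝ ℂ i)

lemma continuous_radiusSq : Continuous (radiusSq : (ι → ℂ) → ℝ) :=
  (contDiff_radiusSq (n := 0)).continuous

lemma isCompact_preimage_radiusSq {K : Set ℝ} (hK : IsCompact K) :
    IsCompact ((radiusSq : (ι → ℂ) → ℝ) ⁻¹' K) := by
  obtain ⟨R, hR⟩ := hK.isBounded.subset_closedBall 0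
  refine (isCompact_closedBall (0 : ι → ℂ) (√R)).of_isClosed_subset
    (hK.isClosed.preimage continuous_radiusSq) fun z hz => ?_
  have hzR : radiusSq z ≤ R := (le_abs_self _).trans (by simpa using hR hz)
  rw [mem_closedBall_zero_iff]
  exact Real.le_sqrt_of_sq_le ((norm_sq_le_radiusSq z).trans hzR)

lemma hasWirtingerGradAt_radiusSq [DecidableEq ι] (z : ι → ℂ) :
    HasWirtingerGradAt (fun z => (radiusSq z : ℂ)) (fun i => conj (z i)) z := by
  simp only [ofReal_radiusSq]
  convert HasWirtingerGradAt.sum (s := Finset.univ) fun i _ =>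
    (HasWirtingerGradAt.coord i z).mul (HasWirtingerGradAt.conj_coord i z) using 1
  ext i
  simp [Pi.single_apply]

end RadiusSq

section TangentialField

open Complex ComplexConjugate

variable {ι : Type*} [Fintype ι]

/-- The divergence of a polynomial vector field. -/
noncomputable def divergence (a : ι → MvPolynomial ι ℂ) : MvPolynomial ι ℂ :=
  ∑ i, pderiv i (a i)

/-- The Hermitian product `⟨a(z), z⟩` of a polynomial vector field with the radial one. -/
noncomputable def radialPairing (a : ι → MvPolynomial ι ℂ) (z : ι → ℂ) : ℂ :=
  ∑ j, eval z (a j) * conj (z j)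

/-- The component `|z|² a(z) - ⟨a(z), z⟩ z` of a polynomial vector field orthogonal to the radial
one, cleared of the denominator `|z|²`. -/
noncomputable def tangentialField (a : ι → MvPolynomial ι ℂ) (i : ι) (z : ι → ℂ) : ℂ :=
  radiusSq z * eval z (a i) - radialPairing a z * z i

variable {f : MvPolynomial ι ℂ} {a : ι → MvPolynomial ι ℂ} {N n : ℕ}

lemma conj_dotProduct_tangentialField (a : ι → MvPolynomial ι ℂ) (z : ι → ℂ) :
    (fun i => conj (z i)) ⬝ᵥ (fun i => tangentialField a i z) = 0 := by
  calc ∑ i, conj (z i) * (radiusSq z * eval z (a i) - radialPairing a z * z i)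
      = radiusSq z * (∑ i, eval z (a i) * conj (z i))
        - radialPairing a z * ∑ i, z i * conj (z i) := by
        rw [Finset.mul_sum, Finset.mul_sum, ← Finset.sum_sub_distrib]
        exact Finset.sum_congr rfl fun i _ => by ring
    _ = 0 := by rw [← ofReal_radiusSq, radialPairing]; ring

lemma gradAt_dotProduct_tangentialField (hf : f.IsHomogeneous N)
    (hsyz : ∑ i, a i * pderiv i f = 0) (z : ι → ℂ) :
    gradAt f z ⬝ᵥ (fun i => tangentialField a i z) = -(radialPairing a z * (N * eval z f)) := by
  have hsyz' : ∑ i, eval z (a i) * gradAt f z i = 0 := by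
    simpa [gradAt] using congrArg (eval z) hsyz
  calc ∑ i, gradAt f z i * (radiusSq z * eval z (a i) - radialPairing a z * z i)
      = radiusSq z * (∑ i, eval z (a i) * gradAt f z i)
        - radialPairing a z * (z ⬝ᵥ gradAt f z) := by
        rw [dotProduct, Finset.mul_sum, Finset.mul_sum, ← Finset.sum_sub_distrib]
        exact Finset.sum_congr rfl fun i _ => by ring
    _ = -(radialPairing a z * (N * eval z f)) := by
        rw [hsyz', dotProduct_gradAt_self hf]; ring

lemma contDiff_radialPairing (a : ι → MvPolynomial ι ℂ) {n : ℕ∞} :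
    ContDiff ℝ n (radialPairing a) :=
  ContDiff.sum fun i _ => (contDiff_eval_left (a i) n).mul
    (conjCLE.contDiff.comp (contDiff_apply ℝ ℂ i))

lemma contDiff_tangentialField (a : ι → MvPolynomial ι ℂ) (i : ι) {n : ℕ∞} :
    ContDiff ℝ n (tangentialField a i) :=
  ((ofRealCLM.contDiff.comp contDiff_radiusSq).mul (contDiff_eval_left (a i) n)).sub
    ((contDiff_radialPairing a).mul (contDiff_apply ℝ ℂ i))

variable [DecidableEq ι]

lemma hasWirtingerGradAt_radialPairing (a : ι → MvPolynomial ι ℂ) (z : ι → ℂ) :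
    HasWirtingerGradAt (radialPairing a) (∑ j, conj (z j) • gradAt (a j) z) z := by
  unfold radialPairing
  convert HasWirtingerGradAt.sum (s := Finset.univ) fun j _ =>
    (HasWirtingerGradAt.mvPolynomial_eval (a j) z).mul (HasWirtingerGradAt.conj_coord j z) using 1
  simp

lemma hasWirtingerDivAt_tangentialField (ha : ∀ i, (a i).IsHomogeneous n) (z : ι → ℂ) :
    HasWirtingerDivAt (tangentialField a)
      (radiusSq z * eval z (divergence a) - (n + Fintype.card ι - 1) * radialPairing a z) z := by
  refine ⟨_, fun i => ((hasWirtingerGradAt_radiusSq z).mul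
    (HasWirtingerGradAt.mvPolynomial_eval (a i) z)).sub
    ((hasWirtingerGradAt_radialPairing a z).mul (HasWirtingerGradAt.coord i z)), ?_⟩
  have hEuler : ∑ i, z i * ∑ j, conj (z j) * gradAt (a j) z i = n * radialPairing a z := by
    calc ∑ i, z i * ∑ j, conj (z j) * gradAt (a j) z i
        = ∑ j, conj (z j) * (z ⬝ᵥ gradAt (a j) z) := by
          simp only [dotProduct, Finset.mul_sum]
          rw [Finset.sum_comm]
          exact Finset.sum_congr rfl fun j _ => Finset.sum_congr rfl fun i _ => by ring
      _ = n * radialPairing a z := by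
          rw [radialPairing, Finset.mul_sum]
          exact Finset.sum_congr rfl fun j _ => by rw [dotProduct_gradAt_self (ha j)]; ring
  have hdiv : ∑ i, gradAt (a i) z i = eval z (divergence a) := by simp [divergence, gradAt]
  simp only [Pi.add_apply, Pi.sub_apply, Pi.smul_apply, Pi.single_eq_same, smul_eq_mul, mul_one,
    Finset.sum_apply, Finset.sum_add_distrib, Finset.sum_sub_distrib, Finset.sum_const,
    Finset.card_univ, nsmul_eq_mul, ← Finset.mul_sum, hEuler, hdiv]
  rw [← radialPairing]
  ring

end TangentialField

section Regularization

open Complex ENNReal Topology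

variable {w : ℂ} {s ε : ℝ}

lemma normSq_add_pos (w : ℂ) (hε : 0 < ε) : 0 < normSq w + ε :=
  add_pos_of_nonneg_of_pos (normSq_nonneg _) hε

lemma rpow_sub_one_mul_self {x : ℝ} (hx : 0 < x) (s : ℝ) : x ^ (s - 1) * x = x ^ s := by
  rw [← Real.rpow_add_one hx.ne', sub_add_cancel]

lemma enorm_regularization_le (w : ℂ) (hs : 0 < s) (hε : 0 < ε) :
    ‖(normSq w + ε) ^ (-s - 1) * ε‖ₑ ≤ (‖w‖ₑ⁻¹) ^ (2 * s) := by
  rcases eq_or_ne w 0 with rfl | hw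
  · simp [ENNReal.top_rpow_of_pos (show 0 < 2 * s by positivity)]
  have hnorm : 0 < ‖w‖ := norm_pos_iff.2 hw
  have hsq : 0 < normSq w := normSq_pos.2 hw
  have hx := normSq_add_pos w hε
  have hpow : (‖w‖ₑ⁻¹) ^ (2 * s) = ENNReal.ofReal (normSq w ^ (-s)) := by
    rw [normSq_eq_norm_sq, ← ofReal_norm, ← ENNReal.ofReal_inv_of_pos hnorm,
      ENNReal.ofReal_rpow_of_pos (by positivity), ← Real.rpow_natCast, ← Real.rpow_mul hnorm.le,
      Real.inv_rpow hnorm.le, ← Real.rpow_neg hnorm.le]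
    congr 2
    push_cast
    ring
  rw [hpow, Real.enorm_of_nonneg (by positivity)]
  refine ENNReal.ofReal_le_ofReal ?_
  calc (normSq w + ε) ^ (-s - 1) * ε ≤ (normSq w + ε) ^ (-s - 1) * (normSq w + ε) := by
        gcongr
        linarith [normSq_nonneg w]
    _ = (normSq w + ε) ^ (-s) := rpow_sub_one_mul_self hx _
    _ ≤ normSq w ^ (-s) := Real.rpow_le_rpow_of_nonpos hsq (by linarith) (by linarith)

lemma tendsto_regularization (hw : w ≠ 0) (s : ℝ) :
    Filter.Tendsto (fun ε => (normSq w + ε) ^ (-s - 1) * ε) (𝓝[>] 0) (𝓝 0) := by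
  have hid : Filter.Tendsto (fun ε : ℝ => ε) (𝓝[>] 0) (𝓝 0) :=
    Filter.tendsto_id.mono_left nhdsWithin_le_nhds
  simpa using ((hid.const_add (normSq w)).rpow_const
    (Or.inl (by simpa using hw)) (p := -s - 1)).mul hid

end Regularization

section Vanishing

open MeasureTheory Topology ENNReal Complex ComplexConjugate

variable {ι : Type*} [Fintype ι] {f : MvPolynomial ι ℂ} {a : ι → MvPolynomial ι ℂ} {N n : ℕ}
  {s ε : ℝ} {φ : ContDiffBump (1 : ℝ)}

/-- The regularised weighted energy `φ(|z|²) |z|² |div a|² (|f|² + ε)^(-s)` of the divergence of a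
vector field `a`. -/
noncomputable def energyDensity (f : MvPolynomial ι ℂ) (a : ι → MvPolynomial ι ℂ)
    (φ : ContDiffBump (1 : ℝ)) (s ε : ℝ) (z : ι → ℂ) : ℝ :=
  φ (radiusSq z) * radiusSq z * normSq (eval z (divergence a)) * (normSq (eval z f) + ε) ^ (-s)

/-- The error made by replacing `|f|²` by `|f|² + ε` in the divergence identity, up to the factor
`s N`. -/
noncomputable def defectDensity (f : MvPolynomial ι ℂ) (a : ι → MvPolynomial ι ℂ)
    (φ : ContDiffBump (1 : ℝ)) (s ε : ℝ) (z : ι → ℂ) : ℂ :=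
  φ (radiusSq z) * conj (eval z (divergence a)) * radialPairing a z *
    ((normSq (eval z f) + ε) ^ (-s - 1) * ε : ℝ)

/-- The weight `conj (div a) (|f|² + ε)^(-s) φ(|z|²)`. -/
noncomputable def energyWeight (f : MvPolynomial ι ℂ) (a : ι → MvPolynomial ι ℂ)
    (φ : ContDiffBump (1 : ℝ)) (s ε : ℝ) (z : ι → ℂ) : ℂ :=
  conj (eval z (divergence a)) *
    (((normSq (eval z f) + ε) ^ (-s) : ℝ) * (φ (radiusSq z) : ℂ))

lemma hasWirtingerDivAt_energyWeight_mul [DecidableEq ι] (hf : f.IsHomogeneous N)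
    (ha : ∀ i, (a i).IsHomogeneous n) (hsyz : ∑ i, a i * pderiv i f = 0)
    (hs : s * N + 1 = n + Fintype.card ι) (hε : 0 < ε) (z : ι → ℂ) :
    HasWirtingerDivAt (fun i z => energyWeight f a φ s ε z * tangentialField a i z)
      (energyDensity f a φ s ε z - s * N * defectDensity f a φ s ε z) z := by
  have hx := normSq_add_pos (eval z f) hε
  have hpow : HasWirtingerGradAt (fun z => (((normSq (eval z f) + ε) ^ (-s) : ℝ) : ℂ)) _ z :=
    (HasWirtingerGradAt.normSq_eval f z).comp_real (φ := fun x => (x + ε) ^ (-s))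
      (((hasDerivAt_id _).add_const ε).rpow_const (p := -s) (Or.inl hx.ne'))
  have hcut : HasWirtingerGradAt (fun z => (φ (radiusSq z) : ℂ)) _ z :=
    (hasWirtingerGradAt_radiusSq z).comp_real
      ((φ.contDiff (n := 1)).differentiable one_ne_zero _).hasDerivAt
  have hdiv : HasWirtingerDivAt (fun i z => energyWeight f a φ s ε z * tangentialField a i z) _ z :=
    HasWirtingerDivAt.mul_left
      ((HasWirtingerGradAt.conj_eval (divergence a) z).mul (hpow.mul hcut))
      (hasWirtingerDivAt_tangentialField ha z)
  convert hdiv using 1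
  simp only [smul_zero, add_zero, add_dotProduct, smul_dotProduct, smul_eq_mul,
    conj_dotProduct_tangentialField, gradAt_dotProduct_tangentialField hf hsyz, id]
  have hsN : (s : ℂ) * N + 1 = n + Fintype.card ι := by exact_mod_cast congrArg Complex.ofReal hs
  have hpow_succ : (((normSq (eval z f) + ε) ^ (-s) : ℝ) : ℂ) =
      ((normSq (eval z f) + ε) ^ (-s - 1) : ℝ) * (eval z f * conj (eval z f) + ε) := by
    rw [mul_conj, ← Complex.ofReal_add, ← Complex.ofReal_mul, rpow_sub_one_mul_self hx]
  simp only [energyWeight, energyDensity, defectDensity, Complex.ofReal_mul, Complex.ofReal_neg,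
    Complex.ofReal_one, hpow_succ,
    ← mul_conj (eval z (divergence a)), ← hsN]
  ring

lemma contDiff_cutoff (φ : ContDiffBump (1 : ℝ)) : ContDiff ℝ 1 fun z : ι → ℂ => φ (radiusSq z) :=
  φ.contDiff.comp contDiff_radiusSq

lemma contDiff_regularization_rpow (f : MvPolynomial ι ℂ) (hε : 0 < ε) (t : ℝ) :
    ContDiff ℝ 1 fun z : ι → ℂ => (normSq (eval z f) + ε) ^ t := by
  exact ((contDiff_normSq.comp (contDiff_eval_left f 1)).add contDiff_const).rpow_const_of_ne
    fun z => (normSq_add_pos _ hε).ne'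

lemma contDiff_energyWeight (hε : 0 < ε) : ContDiff ℝ 1 (energyWeight f a φ s ε) :=
  (conjCLE.contDiff.comp (contDiff_eval_left (divergence a) 1)).mul
    ((ofRealCLM.contDiff.comp (contDiff_regularization_rpow f hε (-s))).mul
      (ofRealCLM.contDiff.comp (contDiff_cutoff φ)))

lemma continuous_energyDensity (hε : 0 < ε) : Continuous (energyDensity f a φ s ε) :=
  (((contDiff_cutoff φ).continuous.mul continuous_radiusSq).mul
    (continuous_normSq.comp (continuous_eval _))).mul
      (contDiff_regularization_rpow f hε _).continuous

lemma continuous_defectDensity (hε : 0 < ε) : Continuous (defectDensity f a φ s ε) :=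
  (((Complex.continuous_ofReal.comp (contDiff_cutoff φ).continuous).mul
    (continuous_conj.comp (continuous_eval _))).mul
      (contDiff_radialPairing a (n := 0)).continuous).mul
        (Complex.continuous_ofReal.comp
          ((contDiff_regularization_rpow f hε _).continuous.mul continuous_const))

lemma hasCompactSupport_of_cutoff_eq_zero (φ : ContDiffBump (1 : ℝ)) {E : Type*} [Zero E]
    {F : (ι → ℂ) → E} (hF : ∀ z, φ (radiusSq z) = 0 → F z = 0) : HasCompactSupport F :=
  HasCompactSupport.intro (isCompact_preimage_radiusSq φ.hasCompactSupport) fun z hz =>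
    hF z (image_eq_zero_of_notMem_tsupport hz)

lemma energyDensity_nonneg (hε : 0 < ε) (z : ι → ℂ) : 0 ≤ energyDensity f a φ s ε z :=
  mul_nonneg (mul_nonneg (mul_nonneg φ.nonneg (radiusSq_nonneg z)) (normSq_nonneg _))
    (Real.rpow_nonneg (normSq_add_pos _ hε).le _)

lemma energyDensity_anti (hs : 0 ≤ s) {ε' : ℝ} (hε : 0 < ε) (hle : ε ≤ ε') (z : ι → ℂ) :
    energyDensity f a φ s ε' z ≤ energyDensity f a φ s ε z :=
  mul_le_mul_of_nonneg_left
    (Real.rpow_le_rpow_of_nonpos (normSq_add_pos _ hε) (by linarith) (by linarith))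
    (mul_nonneg (mul_nonneg φ.nonneg (radiusSq_nonneg z)) (normSq_nonneg _))

lemma integrable_energyDensity (hε : 0 < ε) : Integrable (energyDensity f a φ s ε) :=
  (continuous_energyDensity hε).integrable_of_hasCompactSupport
    (hasCompactSupport_of_cutoff_eq_zero φ fun z hz => by simp [energyDensity, hz])

lemma integral_energyDensity (hf : f.IsHomogeneous N) (ha : ∀ i, (a i).IsHomogeneous n)
    (hsyz : ∑ i, a i * pderiv i f = 0) (hs : s * N + 1 = n + Fintype.card ι) (hε : 0 < ε) :
    ((∫ z, energyDensity f a φ s ε z : ℝ) : ℂ) = s * N * ∫ z, defectDensity f a φ s ε z := by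
  have hdefect : Integrable (defectDensity f a φ s ε) :=
    (continuous_defectDensity hε).integrable_of_hasCompactSupport
      (hasCompactSupport_of_cutoff_eq_zero φ fun z hz => by simp [defectDensity, hz])
  have hzero := integral_wirtingerDiv_eq_zero
    (fun i => (contDiff_energyWeight hε).mul (contDiff_tangentialField a i))
    (fun i => hasCompactSupport_of_cutoff_eq_zero φ fun z hz => by simp [energyWeight, hz])
    (fun z => hasWirtingerDivAt_energyWeight_mul (φ := φ) hf ha hsyz hs hε z)
  have henergy : Integrable fun z => (energyDensity f a φ s ε z : ℂ) :=
    (integrable_energyDensity hε).ofReal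
  rw [integral_sub henergy (hdefect.const_mul _), integral_const_mul, sub_eq_zero] at hzero
  rw [← hzero, integral_complex_ofReal]

/-- A majorant of `defectDensity`, uniform in `ε` and with the cutoff left out. -/
noncomputable def defectBound (f : MvPolynomial ι ℂ) (a : ι → MvPolynomial ι ℂ) (s : ℝ)
    (z : ι → ℂ) : ℝ≥0∞ :=
  ‖eval z (divergence a)‖ₑ * ‖radialPairing a z‖ₑ * (‖eval z f‖ₑ⁻¹) ^ (2 * s)

lemma measurable_defectBound : Measurable (defectBound f a s) :=
  ((continuous_eval _).measurable.enorm.mul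
    (contDiff_radialPairing a (n := 0)).continuous.measurable.enorm).mul
      ((continuous_eval _).measurable.enorm.inv.pow_const _)

lemma enorm_defectDensity_le (hs : 0 < s) (hε : 0 < ε) (z : ι → ℂ) :
    ‖defectDensity f a φ s ε z‖ₑ ≤ ‖(φ (radiusSq z) : ℂ)‖ₑ * defectBound f a s z := by
  have hreg := enorm_regularization_le (eval z f) hs hε
  simp only [defectDensity, defectBound, enorm_mul, RCLike.enorm_conj]
  rw [mul_assoc, mul_assoc, mul_assoc]
  gcongr
  simpa [← Complex.ofReal_mul, ← ofReal_norm] using hreg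

lemma lintegral_cutoff_mul_defectBound_lt_top (hφ : φ.rOut < 1)
    (hfin : ∀ p ≠ 0, FiniteLIntegralAt (defectBound f a s) p) :
    ∫⁻ z, ‖(φ (radiusSq z) : ℂ)‖ₑ * defectBound f a s z < ∞ := by
  set S : Set (ι → ℂ) := radiusSq ⁻¹' tsupport φ
  have hS : IsCompact S := isCompact_preimage_radiusSq φ.hasCompactSupport
  have hS0 : ∀ z ∈ S, z ≠ 0 := by
    rintro _ hz rfl
    have hdist : (1 : ℝ) ≤ φ.rOut := by simpa [S, φ.tsupport_eq, radiusSq] using hz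
    linarith
  calc ∫⁻ z, ‖(φ (radiusSq z) : ℂ)‖ₑ * defectBound f a s z
      ≤ ∫⁻ z, S.indicator (defectBound f a s) z := by
        refine lintegral_mono fun z => ?_
        by_cases hz : z ∈ S
        · rw [Set.indicator_of_mem hz]
          refine mul_le_of_le_one_left' ?_
          rw [← ofReal_norm, norm_real, Real.norm_of_nonneg φ.nonneg]
          exact ENNReal.ofReal_le_one.2 φ.le_one
        · have hcut : φ (radiusSq z) = 0 := image_eq_zero_of_notMem_tsupport hz
          simp [hcut]
    _ = ∫⁻ z in S, defectBound f a s z := lintegral_indicator hS.measurableSet _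
    _ < ∞ := setLIntegral_lt_top_of_finiteLIntegralAt hS fun p hp => hfin p (hS0 p hp)

lemma tendsto_defectDensity {z : ι → ℂ} (hs : 0 < s)
    (hz : ‖(φ (radiusSq z) : ℂ)‖ₑ * defectBound f a s z < ∞) :
    Filter.Tendsto (fun ε => defectDensity f a φ s ε z) (𝓝[>] 0) (𝓝 0) := by
  rcases ne_or_eq (eval z f) 0 with hfz | hfz
  · have hreg := (Complex.continuous_ofReal.tendsto 0).comp (tendsto_regularization hfz s)
    simpa [defectDensity, Function.comp_def] using hreg.const_mul
      (φ (radiusSq z) * conj (eval z (divergence a)) * radialPairing a z)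
  · have hfactor : (φ (radiusSq z) : ℂ) * conj (eval z (divergence a)) * radialPairing a z = 0 := by
      by_contra hne
      simp only [mul_eq_zero, not_or] at hne
      have htop : (0⁻¹ : ℝ≥0∞) ^ (2 * s) = ∞ := by simp [hs]
      rw [defectBound, hfz, enorm_zero, htop, ENNReal.mul_top, ENNReal.mul_top] at hz
      · exact lt_irrefl _ hz
      · simpa using hne.1.1
      · simpa using And.intro hne.1.2 hne.2
    simp only [defectDensity, hfactor, zero_mul]
    exact tendsto_const_nhds

lemma tendsto_lintegral_enorm_defectDensity (hs : 0 < s) (hφ : φ.rOut < 1)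
    (hfin : ∀ p ≠ 0, FiniteLIntegralAt (defectBound f a s) p) :
    Filter.Tendsto (fun ε => ∫⁻ z, ‖defectDensity f a φ s ε z‖ₑ) (𝓝[>] 0) (𝓝 0) := by
  have hint := lintegral_cutoff_mul_defectBound_lt_top hφ hfin
  have hmeas : Measurable fun z => ‖(φ (radiusSq z) : ℂ)‖ₑ * defectBound f a s z :=
    (Complex.continuous_ofReal.comp (contDiff_cutoff φ).continuous).measurable.enorm.mul
      measurable_defectBound
  rw [← lintegral_zero (μ := (volume : Measure (ι → ℂ)))]
  refine tendsto_lintegral_filter_of_dominated_convergence _ ?_ ?_ hint.ne ?_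
  · filter_upwards [self_mem_nhdsWithin] with ε hε
    exact (continuous_defectDensity hε).measurable.enorm
  · filter_upwards [self_mem_nhdsWithin] with ε hε
    exact Filter.Eventually.of_forall (enorm_defectDensity_le hs hε)
  · filter_upwards [ae_lt_top hmeas hint.ne] with z hz
    simpa using (tendsto_defectDensity hs hz).enorm

lemma energyDensity_one_eq_zero (hf : f.IsHomogeneous N) (ha : ∀ i, (a i).IsHomogeneous n)
    (hsyz : ∑ i, a i * pderiv i f = 0) (hs : 0 < s) (hsN : s * N + 1 = n + Fintype.card ι)
    (hφ : φ.rOut < 1) (hfin : ∀ p ≠ 0, FiniteLIntegralAt (defectBound f a s) p) :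
    energyDensity f a φ s 1 = 0 := by
  have hle : ∀ᶠ ε in 𝓝[>] (0 : ℝ), ∫⁻ z, ENNReal.ofReal (energyDensity f a φ s 1 z) ≤
      ‖(s * N : ℂ)‖ₑ * ∫⁻ z, ‖defectDensity f a φ s ε z‖ₑ := by
    filter_upwards [Ioo_mem_nhdsGT zero_lt_one] with ε hε
    calc ∫⁻ z, ENNReal.ofReal (energyDensity f a φ s 1 z)
        ≤ ∫⁻ z, ENNReal.ofReal (energyDensity f a φ s ε z) := lintegral_mono fun z =>
          ENNReal.ofReal_le_ofReal (energyDensity_anti hs.le hε.1 hε.2.le z)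
      _ = ENNReal.ofReal (∫ z, energyDensity f a φ s ε z) :=
          (ofReal_integral_eq_lintegral_ofReal (integrable_energyDensity hε.1)
            (Filter.Eventually.of_forall (energyDensity_nonneg hε.1))).symm
      _ = ‖((∫ z, energyDensity f a φ s ε z : ℝ) : ℂ)‖ₑ := by
          rw [← ofReal_norm, norm_real,
            Real.norm_of_nonneg (integral_nonneg (energyDensity_nonneg hε.1))]
      _ ≤ ‖(s * N : ℂ)‖ₑ * ∫⁻ z, ‖defectDensity f a φ s ε z‖ₑ := by
          rw [integral_energyDensity hf ha hsyz hsN hε.1, enorm_mul]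
          gcongr
          exact enorm_integral_le_lintegral_enorm _
  have hlim := ENNReal.Tendsto.const_mul (a := ‖(s * N : ℂ)‖ₑ)
    (tendsto_lintegral_enorm_defectDensity hs hφ hfin) (Or.inr enorm_ne_top)
  have hzero := ge_of_tendsto hlim hle
  rw [mul_zero, nonpos_iff_eq_zero, lintegral_eq_zero_iff
    (continuous_energyDensity one_pos).measurable.ennreal_ofReal] at hzero
  refine ((continuous_energyDensity one_pos).ae_eq_iff_eq volume continuous_zero).1 ?_
  filter_upwards [hzero] with z hz
  exact le_antisymm (by simpa using hz) (energyDensity_nonneg one_pos z)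

theorem divergence_eq_zero_of_finiteLIntegralAt [Nonempty ι] (hf : f.IsHomogeneous N)
    (ha : ∀ i, (a i).IsHomogeneous n) (hsyz : ∑ i, a i * pderiv i f = 0) (hs : 0 < s)
    (hsN : s * N + 1 = n + Fintype.card ι)
    (hfin : ∀ p ≠ 0, FiniteLIntegralAt (defectBound f a s) p) : divergence a = 0 := by
  classical
  let φ : ContDiffBump (1 : ℝ) := ⟨1 / 4, 1 / 2, by norm_num, by norm_num⟩
  have henergy : energyDensity f a φ s 1 = 0 :=
    energyDensity_one_eq_zero hf ha hsyz hs hsN (by norm_num [φ]) hfin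
  let p : ι → ℂ := Pi.single (Classical.arbitrary ι) 1
  have hp : radiusSq p = 1 := by
    simp [radiusSq, p, Pi.single_apply, apply_ite]
  refine eq_zero_of_eventually_eval_eq_zero (p := p) ?_
  have hball : ∀ᶠ z in 𝓝 p, radiusSq z ∈ Metric.ball 1 (1 / 4) :=
    continuous_radiusSq.continuousAt.eventually_mem
      (Metric.isOpen_ball.mem_nhds (by rw [hp]; exact Metric.mem_ball_self (by norm_num)))
  filter_upwards [hball] with z hz
  have hcut : φ (radiusSq z) = 1 := φ.one_of_mem_closedBall (Metric.ball_subset_closedBall hz)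
  have hr : 0 < radiusSq z := by
    rw [Metric.mem_ball, Real.dist_eq, abs_lt] at hz
    linarith [hz.1]
  have hweight := (Real.rpow_pos_of_pos (normSq_add_pos (eval z f) one_pos) (-s)).ne'
  simpa [energyDensity, hcut, hr.ne', hweight] using congrFun henergy z

end Vanishing

section LocalIntegrability

open MeasureTheory Topology ENNReal

variable {ι : Type*} [Fintype ι]

lemma exists_linearIndependent_sumElim {K V κ : Type*} [Field K] [AddCommGroup V] [Module K V]
    [FiniteDimensional K V] [Fintype κ] {v : κ → V} (hv : LinearIndependent K v) :
    ∃ (m : ℕ) (w : Fin m → V), LinearIndependent K (Sum.elim v w) ∧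
      Fintype.card κ + m = Module.finrank K V := by
  obtain ⟨W, hW⟩ := (Submodule.span K (Set.range v)).exists_isCompl
  refine ⟨_, Subtype.val ∘ Module.finBasis K W, hv.sum_type ?_ ?_, ?_⟩
  · exact (Module.finBasis K W).linearIndependent.map' W.subtype W.ker_subtype
  · rw [Set.range_comp, ← Submodule.coe_subtype, Submodule.span_image,
      (Module.finBasis K W).span_eq, Submodule.map_subtype_top]
    exact hW.disjoint
  · rw [← Submodule.finrank_add_eq_of_isCompl hW, finrank_span_eq_card hv]

lemma enorm_inv_rpow_eq_ofReal {E : Type*} [NormedAddCommGroup E] {w : E} (hw : w ≠ 0) (t : ℝ) :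
    (‖w‖ₑ⁻¹) ^ t = ENNReal.ofReal (‖w‖ ^ (-t)) := by
  have hnorm : 0 < ‖w‖ := norm_pos_iff.2 hw
  rw [← ofReal_norm, ← ENNReal.ofReal_inv_of_pos hnorm,
    ENNReal.ofReal_rpow_of_pos (inv_pos.2 hnorm), Real.inv_rpow hnorm.le,
    Real.rpow_neg hnorm.le]

lemma integrableOn_ball_norm_rpow {t : ℝ} (ht : t < 2) (r : ℝ) :
    IntegrableOn (fun w : ℂ => ‖w‖ ^ (-t)) (Metric.ball 0 r) := by
  refine integrableOn_ball_of_norm_le_rpow (C := 1) (α := t) ?_ ?_ ?_ ?_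
  · simp
  · simpa using ht
  · refine Filter.Eventually.of_forall fun w => ?_
    rw [one_mul, Real.norm_of_nonneg (by positivity)]
  · exact (measurable_norm.pow_const _).aestronglyMeasurable

lemma finiteLIntegralAt_prod_coord {t : ι → ℝ} (ht : ∀ i, t i < 2) (p : ι → ℂ) :
    FiniteLIntegralAt (fun w => ∏ i, (‖w i‖ₑ⁻¹) ^ t i) p := by
  set r : ℝ := ‖p‖ + 1
  set B : Set (ι → ℂ) := Set.univ.pi fun _ => Metric.ball 0 r
  have hB : B ∈ 𝓝 p := (isOpen_set_pi Set.finite_univ fun _ _ => Metric.isOpen_ball).mem_nhds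
    fun i _ => mem_ball_zero_iff.2 ((norm_le_pi_norm p i).trans_lt (lt_add_one _))
  have hint : IntegrableOn (fun w : ι → ℂ => ∏ i, ‖w i‖ ^ (-t i)) B := by
    rw [IntegrableOn, volume_pi, Measure.restrict_pi_pi]
    exact Integrable.fintype_prod fun i => integrableOn_ball_norm_rpow (ht i) r
  refine ⟨B, hB, lt_of_le_of_lt (lintegral_mono_ae (ae_restrict_of_ae ?_)) hint.hasFiniteIntegral⟩
  have hne : ∀ᵐ w : ι → ℂ, ∀ i, w i ≠ 0 :=
    ae_all_iff.2 fun i => Measure.ae_eval_ne (fun _ => volume) i 0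
  filter_upwards [hne] with w hw
  rw [Real.enorm_of_nonneg (by positivity), ENNReal.ofReal_prod_of_nonneg fun i _ => by positivity]
  exact (Finset.prod_congr rfl fun i _ => enorm_inv_rpow_eq_ofReal (hw i) _).le

lemma FiniteLIntegralAt.comp_hasStrictFDerivAt {E : Type*} [NormedAddCommGroup E] [NormedSpace ℝ E]
    [FiniteDimensional ℝ E] [MeasureSpace E] [BorelSpace E] [(volume : Measure E).IsAddHaarMeasure]
    {F : E → ℝ≥0∞} {Φ : E → E} {A : E →L[ℝ] E} {p : E} (hF : FiniteLIntegralAt F (Φ p))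
    (hFm : Measurable F) (hΦ : HasStrictFDerivAt Φ A p) (hΦm : Measurable Φ) (hA : A.det ≠ 0) :
    FiniteLIntegralAt (F ∘ Φ) p := by
  obtain ⟨V, hV, hfin⟩ := hF
  obtain ⟨m, hm, hmA⟩ := ENNReal.lt_iff_exists_nnreal_btwn.1
    (ENNReal.ofReal_pos.2 (abs_pos.2 hA))
  obtain ⟨δ, hδ, hδpos⟩ := ((mul_le_addHaar_image_of_lt_det volume A hmA).and
    self_mem_nhdsWithin).exists
  obtain ⟨U, hU, happrox⟩ := hΦ.approximates_deriv_on_nhds (Or.inr hδpos)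
  obtain ⟨W, hWU, hWo, hpW⟩ := mem_nhds_iff.1 (Filter.inter_mem hU (hΦ.continuousAt hV))
  refine ⟨W, hWo.mem_nhds hpW, ?_⟩
  have hle : (m : ℝ≥0∞) • (volume.restrict W).map Φ ≤ volume.restrict V := by
    refine Measure.le_iff.2 fun s hs => ?_
    rw [Measure.smul_apply, smul_eq_mul, Measure.map_apply hΦm hs,
      Measure.restrict_apply (hΦm hs), Measure.restrict_apply hs]
    refine (hδ _ Φ (happrox.mono_set fun z hz => (hWU hz.2).1)).trans (measure_mono ?_)
    rintro _ ⟨z, ⟨hzs, hzW⟩, rfl⟩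
    exact ⟨hzs, (hWU hzW).2⟩
  have hmul : (m : ℝ≥0∞) * ∫⁻ z in W, (F ∘ Φ) z < ∞ :=
    calc (m : ℝ≥0∞) * ∫⁻ z in W, (F ∘ Φ) z
        = ∫⁻ w, F w ∂((m : ℝ≥0∞) • (volume.restrict W).map Φ) := by
          rw [lintegral_smul_measure, lintegral_map hFm hΦm, smul_eq_mul]
          rfl
      _ ≤ ∫⁻ w in V, F w := lintegral_mono' hle le_rfl
      _ < ∞ := hfin
  exact (ENNReal.mul_lt_top_iff.1 hmul).elim (fun h => h.2) fun h => h.elim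
    (fun h => absurd h hm.ne') fun h => h ▸ zero_lt_top

lemma finiteLIntegralAt_prod_of_square {P : ι → MvPolynomial ι ℂ} {p : ι → ℂ}
    (hP : LinearIndependent ℂ fun i => gradAt (P i) p) {t : ι → ℝ} (ht : ∀ i, t i < 2) :
    FiniteLIntegralAt (fun z => ∏ i, (‖eval z (P i)‖ₑ⁻¹) ^ t i) p := by
  have hdet : (ContinuousLinearMap.pi fun i => diffAt (P i) p).toLinearMap.det ≠ 0 := by
    have hmatrix : (ContinuousLinearMap.pi fun i => diffAt (P i) p).toLinearMap =
        Matrix.toLin' (Matrix.of fun i => gradAt (P i) p) := by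
      ext v i
      simp [diffAt_apply]
    rw [hmatrix, LinearMap.det_toLin', ← isUnit_iff_ne_zero, ← Matrix.isUnit_iff_isUnit_det]
    exact Matrix.linearIndependent_rows_iff_isUnit.1 hP
  have hΦ : HasStrictFDerivAt (𝕜 := ℂ) (fun z : ι → ℂ => fun i => eval z (P i))
      (ContinuousLinearMap.pi fun i => diffAt (P i) p) p :=
    hasStrictFDerivAt_pi.2 fun i => hasStrictFDerivAt_eval (P i) p
  have hFm : Measurable fun w : ι → ℂ => ∏ i, (‖w i‖ₑ⁻¹) ^ t i :=
    Finset.measurable_prod _ fun i _ => (measurable_pi_apply i).enorm.inv.pow_const _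
  refine (finiteLIntegralAt_prod_coord ht _).comp_hasStrictFDerivAt hFm
    (hΦ.restrictScalars ℝ) (measurable_pi_lambda _ fun i => (continuous_eval (P i)).measurable) ?_
  rw [ContinuousLinearMap.det, ContinuousLinearMap.coe_restrictScalars,
    LinearMap.det_restrictScalars]
  simpa [Algebra.norm_complex_apply] using hdet

theorem finiteLIntegralAt_prod_of_linearIndependent {κ : Type*} [Fintype κ]
    {P : κ → MvPolynomial ι ℂ} {p : ι → ℂ} (hP : LinearIndependent ℂ fun k => gradAt (P k) p)
    {t : κ → ℝ} (ht : ∀ k, t k < 2) :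
    FiniteLIntegralAt (fun z => ∏ k, (‖eval z (P k)‖ₑ⁻¹) ^ t k) p := by
  obtain ⟨m, w, hw, hcard⟩ := exists_linearIndependent_sumElim hP
  have e : κ ⊕ Fin m ≃ ι := Fintype.equivOfCardEq (by simpa using hcard)
  have hgrad : (fun i => gradAt (Sum.elim P (linearForm ∘ w) (e.symm i)) p) =
      Sum.elim (fun k => gradAt (P k) p) w ∘ e.symm := by
    ext1 i
    rcases h : e.symm i with _ | _ <;> simp [h, gradAt_linearForm]
  have ht' (i : ι) : Sum.elim t 0 (e.symm i) < 2 := by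
    rcases e.symm i with _ | _ <;> simp [ht]
  refine (finiteLIntegralAt_prod_of_square (hgrad ▸ hw.comp _ e.symm.injective) ht').mono
    (Filter.Eventually.of_forall fun z => le_of_eq ?_)
  simp [← e.prod_comp]

end LocalIntegrability

section ProductBound

open ENNReal

variable {ι : Type*} {T : Finset ι} {u : ι → ℝ≥0∞} {t κ e : ℝ}

lemma rpow_mul_inv_rpow_le {x : ℝ≥0∞} (hx : x ≤ 1) {A B : ℝ} (he : 0 ≤ e)
    (hAB : A ≤ B + e) : x ^ e * (x⁻¹) ^ A ≤ (x⁻¹) ^ B := by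
  rcases eq_or_ne x 0 with rfl | hx0
  · rcases he.eq_or_lt with rfl | he
    · simpa using ENNReal.rpow_le_rpow_of_exponent_le (by simp) (hAB.trans_eq (add_zero B))
    · simp [ENNReal.zero_rpow_of_pos he]
  have htop : x ≠ ∞ := (hx.trans_lt one_lt_top).ne
  rw [ENNReal.inv_rpow, ENNReal.inv_rpow, ← ENNReal.rpow_neg, ← ENNReal.rpow_neg,
    ← ENNReal.rpow_add _ _ hx0 htop]
  exact ENNReal.rpow_le_rpow_of_exponent_ge hx (by linarith)

lemma prod_inv_rpow_le_pow {i : ι} (ht : 0 ≤ t) (hmin : ∀ j ∈ T, u i ≤ u j) :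
    ∏ j ∈ T, ((u j)⁻¹) ^ t ≤ ((u i)⁻¹) ^ (T.card * t) := by
  rw [mul_comm, ENNReal.rpow_mul, ENNReal.rpow_natCast]
  exact Finset.prod_le_pow_card _ _ _ fun j hj =>
    ENNReal.rpow_le_rpow (ENNReal.inv_le_inv.2 (hmin j hj)) ht

lemma rpow_mul_prod_inv_rpow_le_pair {i j : ι} (hi : i ∈ T) (hu : u j ≤ 1)
    (himin : u i ≤ u j) (hjmin : ∀ k ∈ T.erase i, u j ≤ u k) (he : 0 ≤ e) (ht : 0 ≤ t)
    (htκ : t ≤ κ) (hcard : T.card * t ≤ 2 * κ + e) :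
    (u j) ^ e * ∏ k ∈ T, ((u k)⁻¹) ^ t ≤ ((u i)⁻¹) ^ κ * ((u j)⁻¹) ^ κ := by
  have hcard' : (T.erase i).card * t ≤ (κ - t + κ) + e := by
    rw [Finset.cast_card_erase_of_mem hi]
    linarith
  calc (u j) ^ e * ∏ k ∈ T, ((u k)⁻¹) ^ t
      = ((u i)⁻¹) ^ t * ((u j) ^ e * ∏ k ∈ T.erase i, ((u k)⁻¹) ^ t) := by
        rw [← Finset.mul_prod_erase T _ hi]
        ring
    _ ≤ ((u i)⁻¹) ^ t * ((u j) ^ e * ((u j)⁻¹) ^ ((T.erase i).card * t)) := by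
        gcongr
        exact prod_inv_rpow_le_pow ht hjmin
    _ ≤ ((u i)⁻¹) ^ t * (((u j)⁻¹) ^ (κ - t) * ((u j)⁻¹) ^ κ) := by
        rw [← ENNReal.rpow_add_of_nonneg _ _ (by linarith) (by linarith)]
        gcongr
        exact rpow_mul_inv_rpow_le hu he hcard'
    _ ≤ ((u i)⁻¹) ^ t * (((u i)⁻¹) ^ (κ - t) * ((u j)⁻¹) ^ κ) := by
        gcongr
    _ = ((u i)⁻¹) ^ κ * ((u j)⁻¹) ^ κ := by
        rw [← mul_assoc, ← ENNReal.rpow_add_of_nonneg _ _ ht (by linarith), add_sub_cancel]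

lemma exists_subset_mul_prod_inv_rpow_le {F K : ℝ≥0∞} (hu : ∀ i ∈ T, u i ≤ 1) (he : 0 ≤ e)
    (ht : 0 ≤ t) (htκ : t ≤ κ) (hcard : T.card * t ≤ 2 * κ + e) (hF : F ≤ K)
    (hpair : ∀ i ∈ T, ∀ j ∈ T, i ≠ j → F ≤ K * (u i + u j) ^ e) :
    ∃ S ⊆ T, S.card ≤ 2 ∧
      F * ∏ i ∈ T, ((u i)⁻¹) ^ t ≤ 2 ^ e * K * ∏ i ∈ S, ((u i)⁻¹) ^ κ := by
  rcases le_or_gt T.card 2 with hT | hT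
  · refine ⟨T, subset_rfl, hT, mul_le_mul' (hF.trans ?_) (Finset.prod_le_prod' fun i hi => ?_)⟩
    · exact le_mul_of_one_le_left' (by simpa using ENNReal.rpow_le_rpow one_le_two he)
    · exact ENNReal.rpow_le_rpow_of_exponent_le (ENNReal.one_le_inv.2 (hu i hi)) htκ
  obtain ⟨i, hi, himin⟩ := T.exists_min_image u (Finset.card_pos.1 (by omega))
  obtain ⟨j, hj, hjmin⟩ := (T.erase i).exists_min_image u
    (Finset.card_pos.1 (by rw [Finset.card_erase_of_mem hi]; omega))
  obtain ⟨hji, hjT⟩ := Finset.mem_erase.1 hj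
  refine ⟨{i, j}, by simp [Finset.insert_subset_iff, hi, hjT], Finset.card_le_two, ?_⟩
  have hFj : F ≤ 2 ^ e * K * (u j) ^ e :=
    calc F ≤ K * (u i + u j) ^ e := hpair i hi j hjT hji.symm
      _ ≤ K * (2 * u j) ^ e := by
        gcongr
        rw [two_mul]
        gcongr
        exact himin j hjT
      _ = 2 ^ e * K * (u j) ^ e := by
        rw [ENNReal.mul_rpow_of_nonneg _ _ he]
        ring
  calc F * ∏ k ∈ T, ((u k)⁻¹) ^ t
      ≤ 2 ^ e * K * ((u j) ^ e * ∏ k ∈ T, ((u k)⁻¹) ^ t) := by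
        rw [← mul_assoc]
        gcongr
    _ ≤ 2 ^ e * K * ∏ k ∈ {i, j}, ((u k)⁻¹) ^ κ := by
        rw [Finset.prod_pair hji.symm]
        refine mul_le_mul_right ?_ _
        exact rpow_mul_prod_inv_rpow_le_pair hi (hu j hjT) (himin j hjT) hjmin he ht htκ hcard

lemma inv_enorm_prod_rpow (φ : ι → ℂ) (ht : 0 ≤ t) :
    (‖∏ i ∈ T, φ i‖ₑ⁻¹) ^ t = ∏ i ∈ T, (‖φ i‖ₑ⁻¹) ^ t := by
  have hprod : ‖∏ i ∈ T, φ i‖ₑ = ∏ i ∈ T, ‖φ i‖ₑ := by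
    simp only [enorm_eq_nnnorm, nnnorm_prod, ENNReal.ofNNReal_finsetProd]
  rw [hprod, ENNReal.prod_inv_distrib fun i _ j _ _ => Or.inr enorm_ne_top,
    ENNReal.prod_rpow_of_nonneg ht]

end ProductBound

section ProductIntegrability

open ENNReal MeasureTheory Topology

variable {ι σ : Type*} {Q : ι → MvPolynomial σ ℂ} {p : σ → ℂ} {t κ e : ℝ}

lemma eventually_prod_inv_enorm_eval_le {T : Finset ι} (hT : ∀ i ∈ T, eval p (Q i) ≠ 0)
    (ht : 0 ≤ t) :
    ∃ K : ℝ≥0∞, K ≠ ∞ ∧ ∀ᶠ z in 𝓝 p, ∏ i ∈ T, (‖eval z (Q i)‖ₑ⁻¹) ^ t ≤ K := by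
  have hfin (i) (hi : i ∈ T) : (‖eval p (Q i)‖ₑ⁻¹) ^ t ≠ ∞ :=
    ENNReal.rpow_ne_top_of_nonneg ht (by simpa using hT i hi)
  have hle (i) (hi : i ∈ T) :
      ∀ᶠ z in 𝓝 p, (‖eval z (Q i)‖ₑ⁻¹) ^ t ≤ (‖eval p (Q i)‖ₑ⁻¹) ^ t + 1 := by
    have hcont : Continuous fun z => (‖eval z (Q i)‖ₑ⁻¹) ^ t :=
      ENNReal.continuous_rpow_const.comp (continuous_eval (Q i)).enorm.inv
    exact (hcont.continuousAt.eventually_lt_const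
      (ENNReal.lt_add_right (hfin i hi) one_ne_zero)).mono fun z hz => hz.le
  refine ⟨∏ i ∈ T, ((‖eval p (Q i)‖ₑ⁻¹) ^ t + 1), ENNReal.prod_ne_top fun i hi => ?_, ?_⟩
  · exact ENNReal.add_ne_top.2 ⟨hfin i hi, one_ne_top⟩
  · filter_upwards [(Filter.eventually_all_finset T).2 hle] with z hz
    exact Finset.prod_le_prod' hz

lemma eventually_enorm_eval_le_one {P : MvPolynomial σ ℂ} (hP : eval p P = 0) :
    ∀ᶠ z in 𝓝 p, ‖eval z P‖ₑ ≤ 1 :=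
  ((continuous_eval P).enorm.continuousAt.eventually_lt_const
    (by simp [hP])).mono fun _ hz => hz.le

lemma exists_ne_top_forall_le_mul {E κ : Type*} {l : Filter E} {T : Finset κ} {F : E → ℝ≥0∞}
    {G : κ → E → ℝ≥0∞} (h : ∀ k ∈ T, ∃ K ≠ ∞, ∀ᶠ z in l, F z ≤ K * G k z) :
    ∃ K ≠ ∞, ∀ᶠ z in l, ∀ k ∈ T, F z ≤ K * G k z := by
  choose! K hK hle using h
  refine ⟨∑ k ∈ T, K k, ENNReal.sum_ne_top.2 hK, (Filter.eventually_all_finset T).2 fun k hk => ?_⟩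
  filter_upwards [hle k hk] with z hz
  refine hz.trans ?_
  gcongr
  exact Finset.single_le_sum (fun _ _ => zero_le) hk

variable [Fintype σ]

lemma finiteLIntegralAt_mul_prod_inv_rpow {T : Finset ι} {F : (σ → ℂ) → ℝ≥0∞}
    (hT : ∀ i ∈ T, eval p (Q i) = 0)
    (hind : ∀ S ⊆ T, S.card ≤ 2 → LinearIndepOn ℂ (fun i => gradAt (Q i) p) (S : Set ι))
    (he : 0 ≤ e) (ht : 0 ≤ t) (htκ : t ≤ κ) (hκ : κ < 2) (hcard : T.card * t ≤ 2 * κ + e)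
    (hF : ∃ K ≠ ∞, ∀ᶠ z in 𝓝 p, F z ≤ K)
    (hpair : ∀ i ∈ T, ∀ j ∈ T, i ≠ j →
      ∃ K ≠ ∞, ∀ᶠ z in 𝓝 p, F z ≤ K * (‖eval z (Q i)‖ₑ + ‖eval z (Q j)‖ₑ) ^ e) :
    FiniteLIntegralAt (fun z => F z * ∏ i ∈ T, (‖eval z (Q i)‖ₑ⁻¹) ^ t) p := by
  set G : Finset ι → (σ → ℂ) → ℝ≥0∞ := fun S z => ∏ i ∈ S, (‖eval z (Q i)‖ₑ⁻¹) ^ κ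
  have hG : FiniteLIntegralAt (fun z => ∑ S ∈ T.powerset with S.card ≤ 2, G S z) p := by
    refine FiniteLIntegralAt.sum _ (fun S hS => ?_) fun S _ => ?_
    · obtain ⟨hST, hS2⟩ := Finset.mem_filter.1 hS
      have hS : LinearIndependent ℂ fun i : S => gradAt (Q i) p :=
        hind S (Finset.mem_powerset.1 hST) hS2
      simpa only [G, ← Finset.prod_coe_sort S] using
        finiteLIntegralAt_prod_of_linearIndependent hS fun _ => hκ
    · exact Finset.measurable_prod _ fun i _ =>
        (continuous_eval (Q i)).measurable.enorm.inv.pow_const _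
  obtain ⟨K₁, hK₁, hF⟩ := hF
  obtain ⟨K₂, hK₂, hpair⟩ := exists_ne_top_forall_le_mul (T := T.offDiag) (F := F)
    (G := fun k z => (‖eval z (Q k.1)‖ₑ + ‖eval z (Q k.2)‖ₑ) ^ e) fun k hk => by
      obtain ⟨hi, hj, hij⟩ := Finset.mem_offDiag.1 hk
      exact hpair k.1 hi k.2 hj hij
  have hconst : 2 ^ e * (K₁ + K₂) ≠ ∞ := ENNReal.mul_ne_top
    (ENNReal.rpow_ne_top_of_nonneg he ENNReal.ofNat_ne_top) (ENNReal.add_ne_top.2 ⟨hK₁, hK₂⟩)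
  refine (hG.const_mul hconst).mono ?_
  have hone := (Filter.eventually_all_finset T).2 fun i hi => eventually_enorm_eval_le_one (hT i hi)
  filter_upwards [hF, hpair, hone] with z hFz hpairz honez
  obtain ⟨S, hST, hS2, hle⟩ :=
    exists_subset_mul_prod_inv_rpow_le (F := F z) (K := K₁ + K₂) honez he ht htκ hcard
      (hFz.trans le_self_add) fun i hi j hj hij =>
        (hpairz (i, j) (Finset.mem_offDiag.2 ⟨hi, hj, hij⟩)).trans (by gcongr; exact le_add_self)
  refine hle.trans (mul_le_mul_right ?_ _)
  exact Finset.single_le_sum (f := fun S => G S z) (fun _ _ => zero_le)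
    (Finset.mem_filter.2 ⟨Finset.mem_powerset.2 hST, hS2⟩)

lemma FiniteLIntegralAt.mul_inv_prod_rpow [Fintype ι] {F : (σ → ℂ) → ℝ≥0∞} (ht : 0 ≤ t)
    (hF : FiniteLIntegralAt
      (fun z => F z * ∏ i with eval p (Q i) = 0, (‖eval z (Q i)‖ₑ⁻¹) ^ t) p) :
    FiniteLIntegralAt (fun z => F z * (‖eval z (∏ i, Q i)‖ₑ⁻¹) ^ t) p := by
  obtain ⟨K, hK, hle⟩ := eventually_prod_inv_enorm_eval_le (Q := Q) (p := p)
    (T := {i | ¬eval p (Q i) = 0}) (by simp) ht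
  refine (hF.const_mul hK).mono (hle.mono fun z hz => ?_)
  rw [map_prod, inv_enorm_prod_rpow _ ht,
    ← Finset.prod_filter_mul_prod_filter_not univ (fun i => eval p (Q i) = 0), ← mul_assoc,
    mul_comm K]
  gcongr

end ProductIntegrability

section LinearAlgebra

open Matrix

variable {K ι κ : Type*} [Field K] [Fintype ι] {v : κ → ι → K} {p w : ι → K}

lemma mem_ker_mulVecLin_iff : w ∈ LinearMap.ker (Matrix.of v).mulVecLin ↔ ∀ i, v i ⬝ᵥ w = 0 := by
  simp [funext_iff, mulVec]

variable [Fintype κ]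

lemma card_add_finrank_ker_mulVecLin (hv : LinearIndependent K v) :
    Fintype.card κ + Module.finrank K (LinearMap.ker (Matrix.of v).mulVecLin) = Fintype.card ι := by
  have hrank : (Matrix.of v).rank = Fintype.card κ := LinearIndependent.rank_matrix hv
  rw [← hrank, Matrix.rank, LinearMap.finrank_range_add_finrank_ker,
    Module.finrank_fintype_fun_eq_card]

lemma exists_eq_smul_of_forall_dotProduct_eq_zero (hv : LinearIndependent K v)
    (hcard : Fintype.card ι = Fintype.card κ + 1) (hp : p ≠ 0) (hvp : ∀ i, v i ⬝ᵥ p = 0)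
    (hvw : ∀ i, v i ⬝ᵥ w = 0) : ∃ c : K, w = c • p := by
  have hker := card_add_finrank_ker_mulVecLin hv
  have hone : Module.finrank K (LinearMap.ker (Matrix.of v).mulVecLin) = 1 := by omega
  obtain ⟨c, hc⟩ := (finrank_eq_one_iff_of_nonzero'
    (⟨p, mem_ker_mulVecLin_iff.2 hvp⟩ : LinearMap.ker (Matrix.of v).mulVecLin)
    (by simpa using hp)).1 hone ⟨w, mem_ker_mulVecLin_iff.2 hvw⟩
  exact ⟨c, (congrArg Subtype.val hc).symm⟩

lemma mem_span_range_of_dotProduct_eq_zero (hv : LinearIndependent K v)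
    (hcard : Fintype.card ι = Fintype.card κ + 1) (hp : p ≠ 0) (hvp : ∀ i, v i ⬝ᵥ p = 0)
    (hwp : w ⬝ᵥ p = 0) : w ∈ Submodule.span K (Set.range v) := by
  by_contra hw
  have hker := card_add_finrank_ker_mulVecLin (hv.option hw)
  rw [Fintype.card_option] at hker
  have hbot : LinearMap.ker (Matrix.of fun o : Option κ => o.casesOn' w v).mulVecLin = ⊥ :=
    Submodule.finrank_eq_zero.1 (by omega)
  exact hp ((Submodule.eq_bot_iff _).1 hbot p
    (mem_ker_mulVecLin_iff.2 (Option.forall.2 ⟨hwp, hvp⟩)))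

lemma eigenvalue_eq_of_mem_span_pair {V : Type*} [AddCommGroup V] [Module K V] {φ : V →ₗ[K] V}
    {x y z : V} {μ ν ξ : K} (hxy : LinearIndependent K ![x, y]) (hxz : LinearIndependent K ![x, z])
    (hyz : LinearIndependent K ![y, z]) (hz : z ∈ Submodule.span K {x, y}) (hx : φ x = μ • x)
    (hy : φ y = ν • y) (hz' : φ z = ξ • z) : μ = ν := by
  obtain ⟨α, β, rfl⟩ := Submodule.mem_span_pair.1 hz
  have hα : α ≠ 0 := by
    rintro rfl
    exact absurd (LinearIndependent.pair_iff.1 hyz β (-1) (by module)) (by simp)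
  have hβ : β ≠ 0 := by
    rintro rfl
    exact absurd (LinearIndependent.pair_iff.1 hxz α (-1) (by module)) (by simp)
  simp only [map_add, map_smul, hx, hy] at hz'
  obtain ⟨hμ, hν⟩ := LinearIndependent.pair_iff.1 hxy (α * (μ - ξ)) (β * (ν - ξ)) (by
    rw [← sub_eq_zero] at hz'
    rw [← hz']
    module)
  have hμξ : μ = ξ := sub_eq_zero.1 ((mul_eq_zero.1 hμ).resolve_left hα)
  exact hμξ.trans (sub_eq_zero.1 ((mul_eq_zero.1 hν).resolve_left hβ)).symm

-- `J - γ` has image in the line `K p`, so it is `p wᵀ` for some `w`.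
lemma trace_eq_of_vecMul_eq_smul {J : Matrix ι ι K} {γ ρ : K}
    (hv : LinearIndependent K v) (hcard : Fintype.card ι = Fintype.card κ + 1) (hp : p ≠ 0)
    (hvp : ∀ i, v i ⬝ᵥ p = 0) (hvJ : ∀ i, v i ᵥ* J = γ • v i) (hJp : J *ᵥ p = ρ • p) :
    J.trace = Fintype.card κ * γ + ρ := by
  classical
  have hcol (k) : ∃ c : K, (J - γ • 1).col k = c • p :=
    exists_eq_smul_of_forall_dotProduct_eq_zero hv hcard hp hvp fun i => by
      have hzero : v i ᵥ* (J - γ • 1) = 0 := by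
        rw [vecMul_sub, hvJ, vecMul_smul, vecMul_one, sub_self]
      exact congrFun hzero k
  choose u hu using hcol
  have hJ : J = γ • 1 + vecMulVec p u := by
    rw [← sub_eq_iff_eq_add']
    ext i k
    simpa [vecMulVec_apply, mul_comm] using congrFun (hu k) i
  have hρ : γ + u ⬝ᵥ p = ρ := by
    have hsmul : (γ + u ⬝ᵥ p - ρ) • p = 0 := by
      rw [sub_smul, ← hJp, hJ, add_mulVec, smul_mulVec, one_mulVec, vecMulVec_mulVec, add_smul]
      simp
    exact sub_eq_zero.1 ((smul_eq_zero.1 hsmul).resolve_right hp)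
  rw [hJ, trace_add, trace_smul, trace_one, trace_vecMulVec, ← hρ, hcard, dotProduct_comm p]
  push_cast
  simp only [smul_eq_mul]
  ring

end LinearAlgebra

section Cofactors

lemma derivation_prod_of_eq_mul {A R ι : Type*} [CommSemiring A] [CommRing R] [Algebra A R]
    (D : Derivation A R R) {Q g : ι → R} {s : Finset ι} (hg : ∀ i ∈ s, D (Q i) = Q i * g i) :
    D (∏ i ∈ s, Q i) = (∏ i ∈ s, Q i) * ∑ i ∈ s, g i := by
  induction s using Finset.induction_on with
  | empty => simp
  | insert i s hi ih =>
    rw [Finset.forall_mem_insert] at hg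
    rw [Finset.prod_insert hi, Finset.sum_insert hi, D.leibniz, ih hg.2, hg.1, smul_eq_mul,
      smul_eq_mul]
    ring

lemma exists_cofactors_of_derivation_prod_eq_zero {A R ι : Type*} [CommSemiring A] [CommRing R]
    [IsDomain R] [DecompositionMonoid R] [Algebra A R] (D : Derivation A R R) {Q : ι → R}
    {s : Finset ι} (hQ : ∀ i ∈ s, Q i ≠ 0)
    (hrel : (s : Set ι).Pairwise fun i j => IsRelPrime (Q i) (Q j)) (hD : D (∏ i ∈ s, Q i) = 0) :
    ∃ g : ι → R, (∀ i ∈ s, D (Q i) = Q i * g i) ∧ ∑ i ∈ s, g i = 0 := by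
  have hdvd (i) (hi : i ∈ s) : Q i ∣ D (Q i) := by
    have hrel_i : IsRelPrime (Q i) (∏ j ∈ s.erase i, Q j) :=
      IsRelPrime.prod_right fun j hj =>
        hrel hi (Finset.mem_of_mem_erase hj) (Finset.ne_of_mem_erase hj).symm
    refine hrel_i.dvd_of_dvd_mul_left ⟨-D (∏ j ∈ s.erase i, Q j), ?_⟩
    rw [← Finset.mul_prod_erase s Q hi, D.leibniz, smul_eq_mul, smul_eq_mul] at hD
    linear_combination hD
  choose! g hg using hdvd
  rw [derivation_prod_of_eq_mul D hg] at hD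
  exact ⟨g, hg, (mul_eq_zero.1 hD).resolve_left (Finset.prod_ne_zero_iff.2 hQ)⟩

lemma exists_ne_zero_eval_eq_zero {K σ : Type*} [Field K] [IsAlgClosed K] [Finite σ]
    [Nontrivial σ] {h : MvPolynomial σ K} (hh : ¬IsUnit h) : ∃ p : σ → K, p ≠ 0 ∧ eval p h = 0 := by
  by_contra! hne
  have hdvd (i : σ) : ∃ n : ℕ, h ∣ X i ^ n := by
    have hmem : (X i : MvPolynomial σ K) ∈ (Ideal.span {h}).radical := by
      rw [← vanishingIdeal_zeroLocus_eq_radical (K := K)]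
      intro p hp
      have hp0 : p = 0 := by
        by_contra hp0
        exact hne p hp0 (by simpa using hp h (Ideal.mem_span_singleton_self h))
      simp [hp0]
    obtain ⟨n, hn⟩ := hmem
    exact ⟨n, Ideal.mem_span_singleton.1 hn⟩
  obtain ⟨i, j, hij⟩ := exists_pair_ne σ
  obtain ⟨m, hm⟩ := hdvd i
  obtain ⟨n, hn⟩ := hdvd j
  have hrel : IsRelPrime (X i : MvPolynomial σ K) (X j) :=
    X_prime.irreducible.isRelPrime_iff_not_dvd.2 fun hX => hij (X_dvd_X.1 hX)
  exact hh (hrel.pow hm hn)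

lemma isRelPrime_of_linearIndependent_gradAt {K σ : Type*} [Field K] [IsAlgClosed K] [Finite σ]
    [Nontrivial σ] {P Q : MvPolynomial σ K}
    (hPQ : ∀ p ≠ 0, eval p P = 0 → eval p Q = 0 → LinearIndependent K ![gradAt P p, gradAt Q p]) :
    IsRelPrime P Q := by
  rintro h ⟨P', rfl⟩ ⟨Q', rfl⟩
  by_contra hh
  obtain ⟨p, hp, hhp⟩ := exists_ne_zero_eval_eq_zero hh
  have hind := hPQ p hp (by simp [hhp]) (by simp [hhp])
  simp only [gradAt_mul, hhp, zero_smul, zero_add] at hind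
  obtain ⟨hQ', _⟩ := LinearIndependent.pair_iff.1 hind (eval p Q') (-eval p P') (by module)
  exact hind.ne_zero 1 (by simp [hQ'])

end Cofactors

section PointwiseCofactor

open Matrix

variable {σ : Type*} [Fintype σ] {a : σ → MvPolynomial σ ℂ} {P g : MvPolynomial σ ℂ} {r n : ℕ}
  {p : σ → ℂ} {c : ℂ}

/-- The Jacobian matrix at `p` of a polynomial vector field. -/
noncomputable def jacobianAt (a : σ → MvPolynomial σ ℂ) (p : σ → ℂ) : Matrix σ σ ℂ :=
  of fun i => gradAt (a i) p

lemma trace_jacobianAt (a : σ → MvPolynomial σ ℂ) (p : σ → ℂ) :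
    (jacobianAt a p).trace = eval p (divergence a) := by
  simp [jacobianAt, trace, divergence, gradAt]

lemma jacobianAt_mulVec_self (ha : ∀ i, (a i).IsHomogeneous r) (p : σ → ℂ) :
    jacobianAt a p *ᵥ p = (r : ℂ) • fun i => eval p (a i) := by
  ext i
  rw [mulVec, dotProduct_comm]
  exact dotProduct_gradAt_self (ha i) p

lemma dotProduct_gradAt_pderiv (hP : P.IsHomogeneous n) (p : σ → ℂ) (k : σ) :
    p ⬝ᵥ gradAt (pderiv k P) p = (n - 1) * eval p (pderiv k P) := by
  rw [dotProduct_gradAt_self hP.pderiv]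
  rcases n with _ | n
  · rw [totalDegree_eq_zero_iff_eq_C.1 (Nat.le_zero.1 hP.totalDegree_le)]
    simp
  · simp

lemma dotProduct_gradAt_eq_of_cofactor (hPg : ∑ i, a i * pderiv i P = P * g) (p : σ → ℂ) :
    (fun i => eval p (a i)) ⬝ᵥ gradAt P p = eval p P * eval p g := by
  simpa [dotProduct, gradAt] using congrArg (eval p) hPg

lemma eval_cofactor_of_eval_ne_zero (hP : P.IsHomogeneous n)
    (hPg : ∑ i, a i * pderiv i P = P * g) (hap : (fun i => eval p (a i)) = c • p)
    (hPp : eval p P ≠ 0) : eval p g = c * n := by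
  have hEuler := dotProduct_gradAt_eq_of_cofactor hPg p
  rw [hap, smul_dotProduct, dotProduct_gradAt_self hP, smul_eq_mul] at hEuler
  exact mul_left_cancel₀ hPp (by linear_combination -hEuler)

lemma gradAt_vecMul_jacobianAt (hP : P.IsHomogeneous n) (hPg : ∑ i, a i * pderiv i P = P * g)
    (hap : (fun i => eval p (a i)) = c • p) (hPp : eval p P = 0) :
    gradAt P p ᵥ* jacobianAt a p = (eval p g - c * (n - 1)) • gradAt P p := by
  ext k
  have hHess : ∑ i, eval p (a i) * eval p (pderiv k (pderiv i P)) =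
      c * ((n - 1) * eval p (pderiv k P)) := by
    rw [← dotProduct_gradAt_pderiv hP, ← smul_eq_mul c, ← smul_dotProduct, ← hap]
    exact Finset.sum_congr rfl fun i _ => by rw [gradAt, pderiv_pderiv_comm]
  have hderiv := congrArg (fun R => eval p (pderiv k R)) hPg
  simp only [map_sum, pderiv_mul, map_add, map_mul, Finset.sum_add_distrib, hHess, hPp, zero_mul,
    add_zero] at hderiv
  have hvecMul : (gradAt P p ᵥ* jacobianAt a p) k =
      ∑ i, eval p (pderiv k (a i)) * eval p (pderiv i P) :=
    Finset.sum_congr rfl fun i _ => mul_comm _ _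
  rw [hvecMul, Pi.smul_apply, smul_eq_mul, gradAt]
  linear_combination hderiv

end PointwiseCofactor

section Arrangement

open Matrix

variable {ι : Type*} {Q : ι → MvPolynomial (Fin 3) ℂ} {n : ι → ℕ} {p : Fin 3 → ℂ}

/-- An arrangement of smooth curves `Q i = 0` of degree `n i` in `ℙ²(ℂ)`, any two of which meet
transversally. Taking `i = j` in the second field expresses smoothness; points of `ℙ²` are
represented by nonzero vectors. -/
structure IsTransversalArrangement (Q : ι → MvPolynomial (Fin 3) ℂ) (n : ι → ℕ) : Prop where
  isHomogeneous : ∀ i, (Q i).IsHomogeneous (n i)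
  linearIndepOn_gradAt : ∀ p ≠ 0, ∀ i j, eval p (Q i) = 0 → eval p (Q j) = 0 →
    LinearIndepOn ℂ (fun k => gradAt (Q k) p) {i, j}

/-- The components of the curve `∏ i, Q i = 0` passing through `p`. -/
noncomputable def branches [Fintype ι] (Q : ι → MvPolynomial (Fin 3) ℂ) (p : Fin 3 → ℂ) :
    Finset ι := {i | eval p (Q i) = 0}

lemma mem_branches [Fintype ι] {i : ι} : i ∈ branches Q p ↔ eval p (Q i) = 0 := by
  simp [branches]

lemma branches_eq_empty [Fintype ι] (hp : eval p (∏ i, Q i) ≠ 0) : branches Q p = ∅ := by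
  rw [map_prod, Finset.prod_ne_zero_iff] at hp
  exact Finset.filter_eq_empty_iff.2 hp

namespace IsTransversalArrangement

lemma linearIndependent_pair (hQ : IsTransversalArrangement Q n) (hp : p ≠ 0) {i j : ι}
    (hij : i ≠ j) (hi : eval p (Q i) = 0) (hj : eval p (Q j) = 0) :
    LinearIndependent ℂ ![gradAt (Q i) p, gradAt (Q j) p] := by
  rw [LinearIndependent.pair_iff]
  exact (LinearIndepOn.pair_iff _ hij).1 (hQ.linearIndepOn_gradAt p hp i j hi hj)

lemma gradAt_ne_zero (hQ : IsTransversalArrangement Q n) (hp : p ≠ 0) {i : ι}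
    (hi : eval p (Q i) = 0) : gradAt (Q i) p ≠ 0 :=
  (hQ.linearIndepOn_gradAt p hp i i hi hi).ne_zero (by simp)

lemma ne_zero (hQ : IsTransversalArrangement Q n) (i : ι) : Q i ≠ 0 := by
  intro hi
  refine hQ.gradAt_ne_zero (p := 1) (i := i) one_ne_zero (by simp [hi]) ?_
  ext
  simp [hi, gradAt]

lemma isRelPrime (hQ : IsTransversalArrangement Q n) {i j : ι} (hij : i ≠ j) :
    IsRelPrime (Q i) (Q j) :=
  isRelPrime_of_linearIndependent_gradAt fun _ hp hi hj => hQ.linearIndependent_pair hp hij hi hj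

lemma gradAt_dotProduct_eq_zero (hQ : IsTransversalArrangement Q n) {i : ι}
    (hi : eval p (Q i) = 0) : gradAt (Q i) p ⬝ᵥ p = 0 := by
  rw [dotProduct_comm, dotProduct_gradAt_self (hQ.isHomogeneous i), hi, mul_zero]

lemma exists_cofactors [Fintype ι] (hQ : IsTransversalArrangement Q n)
    {a : Fin 3 → MvPolynomial (Fin 3) ℂ} (hsyz : ∑ k, a k * pderiv k (∏ i, Q i) = 0) :
    ∃ g : ι → MvPolynomial (Fin 3) ℂ,
      (∀ i, ∑ k, a k * pderiv k (Q i) = Q i * g i) ∧ ∑ i, g i = 0 := by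
  let D : Derivation ℂ (MvPolynomial (Fin 3) ℂ) (MvPolynomial (Fin 3) ℂ) := ∑ k, a k • pderiv k
  have hD (P) : D P = ∑ k, a k * pderiv k P := by simp [D, Fin.sum_univ_three]
  obtain ⟨g, hg, hsum⟩ := exists_cofactors_of_derivation_prod_eq_zero D (fun i _ => hQ.ne_zero i)
    (fun i _ j _ hij => hQ.isRelPrime hij) ((hD _).trans hsyz)
  exact ⟨g, fun i => (hD _).symm.trans (hg i (Finset.mem_univ i)), hsum⟩

variable [Fintype ι] {a : Fin 3 → MvPolynomial (Fin 3) ℂ} {g : ι → MvPolynomial (Fin 3) ℂ}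
  {r : ℕ}

lemma exists_eval_eq_smul (hQ : IsTransversalArrangement Q n)
    (hg : ∀ i, ∑ k, a k * pderiv k (Q i) = Q i * g i) (hp : p ≠ 0)
    (hbranches : 2 ≤ (branches Q p).card) : ∃ c : ℂ, (fun k => eval p (a k)) = c • p := by
  obtain ⟨i, hi, j, hj, hij⟩ := Finset.one_lt_card.1 hbranches
  rw [mem_branches] at hi hj
  have htangent (l) (hl : eval p (Q l) = 0) : gradAt (Q l) p ⬝ᵥ (fun k => eval p (a k)) = 0 := by
    rw [dotProduct_comm, dotProduct_gradAt_eq_of_cofactor (hg l), hl, zero_mul]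
  exact exists_eq_smul_of_forall_dotProduct_eq_zero (hQ.linearIndependent_pair hp hij hi hj)
    (by simp) hp
    (Fin.forall_fin_two.2 ⟨hQ.gradAt_dotProduct_eq_zero hi, hQ.gradAt_dotProduct_eq_zero hj⟩)
    (Fin.forall_fin_two.2 ⟨htangent i hi, htangent j hj⟩)

lemma eigenvalue_eq (hQ : IsTransversalArrangement Q n) (hp : p ≠ 0) {J : Matrix (Fin 3) (Fin 3) ℂ}
    {μ : ι → ℂ} (hbranches : 3 ≤ (branches Q p).card)
    (hJ : ∀ i ∈ branches Q p, gradAt (Q i) p ᵥ* J = μ i • gradAt (Q i) p) {i j : ι}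
    (hi : i ∈ branches Q p) (hj : j ∈ branches Q p) : μ i = μ j := by
  rcases eq_or_ne i j with rfl | hij
  · rfl
  obtain ⟨l, hl, hlij⟩ := Finset.exists_mem_notMem_of_card_lt_card (s := {i, j})
    (Finset.card_le_two.trans_lt hbranches)
  obtain ⟨hli, hlj⟩ : l ≠ i ∧ l ≠ j := by simpa [not_or] using hlij
  have hJi := hJ i hi
  have hJj := hJ j hj
  have hJl := hJ l hl
  rw [mem_branches] at hi hj hl
  have hind := hQ.linearIndependent_pair hp hij hi hj
  have hspan := mem_span_range_of_dotProduct_eq_zero hind (by simp) hp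
    (Fin.forall_fin_two.2 ⟨hQ.gradAt_dotProduct_eq_zero hi, hQ.gradAt_dotProduct_eq_zero hj⟩)
    (hQ.gradAt_dotProduct_eq_zero hl)
  rw [Matrix.range_cons_cons_empty] at hspan
  exact eigenvalue_eq_of_mem_span_pair (φ := J.vecMulLinear) hind
    (hQ.linearIndependent_pair hp hli.symm hi hl) (hQ.linearIndependent_pair hp hlj.symm hj hl)
    hspan hJi hJj hJl

lemma eval_divergence_eq (hQ : IsTransversalArrangement Q n) (hp : p ≠ 0) {γ ρ : ℂ}
    (hbranches : 2 ≤ (branches Q p).card)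
    (hγ : ∀ i ∈ branches Q p, gradAt (Q i) p ᵥ* jacobianAt a p = γ • gradAt (Q i) p)
    (hρ : jacobianAt a p *ᵥ p = ρ • p) : eval p (divergence a) = 2 * γ + ρ := by
  obtain ⟨i, hi, j, hj, hij⟩ := Finset.one_lt_card.1 hbranches
  have hγi := hγ i hi
  have hγj := hγ j hj
  rw [mem_branches] at hi hj
  rw [← trace_jacobianAt, trace_eq_of_vecMul_eq_smul (hQ.linearIndependent_pair hp hij hi hj)
    (by simp) hp
    (Fin.forall_fin_two.2 ⟨hQ.gradAt_dotProduct_eq_zero hi, hQ.gradAt_dotProduct_eq_zero hj⟩)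
    (Fin.forall_fin_two.2 ⟨hγi, hγj⟩) hρ]
  simp

-- The eigenvalue `γ` of the Jacobian matrix of `a` on the plane orthogonal to `p` and its
-- eigenvalue `r c` on `p` add up to the trace `2 γ + r c = 0`, while the cofactors `c n i` of the
-- curves missing `p` and `γ + c (n i - 1)` of those through `p` sum to zero.
lemma mul_eval_eq_zero_of_three_le_card_branches (hQ : IsTransversalArrangement Q n)
    (ha : ∀ k, (a k).IsHomogeneous r) (hsyz : ∑ k, a k * pderiv k (∏ i, Q i) = 0)
    (hdiv : divergence a = 0) (hp : p ≠ 0) (hbranches : 3 ≤ (branches Q p).card) (k : Fin 3) :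
    (2 * ∑ i, n i - (branches Q p).card * (r + 2) : ℂ) * eval p (a k) = 0 := by
  obtain ⟨g, hg, hsum⟩ := hQ.exists_cofactors hsyz
  obtain ⟨c, hc⟩ := hQ.exists_eval_eq_smul hg hp (by omega)
  set J := jacobianAt a p
  have hJ (i) (hi : i ∈ branches Q p) :
      gradAt (Q i) p ᵥ* J = (eval p (g i) - c * (n i - 1)) • gradAt (Q i) p :=
    gradAt_vecMul_jacobianAt (hQ.isHomogeneous i) (hg i) hc (mem_branches.1 hi)
  obtain ⟨i, hi⟩ := Finset.card_pos.1 (show 0 < (branches Q p).card by omega)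
  set γ := eval p (g i) - c * (n i - 1)
  have hγ (l) (hl : l ∈ branches Q p) : eval p (g l) - c * (n l - 1) = γ :=
    hQ.eigenvalue_eq hp hbranches hJ hl hi
  have htrace : 2 * γ + r * c = 0 := by
    rw [← hQ.eval_divergence_eq hp (by omega) (fun l hl => (hJ l hl).trans (by rw [hγ l hl]))
      (by rw [jacobianAt_mulVec_self ha, hc, smul_smul]), hdiv, map_zero]
  have hcofactors : (branches Q p).card * (γ - c) + c * ∑ i, (n i : ℂ) = 0 := by
    have hgi (l) : eval p (g l) = (if l ∈ branches Q p then γ - c else 0) + c * n l := by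
      split_ifs with hl
      · linear_combination hγ l hl
      · rw [zero_add]
        exact eval_cofactor_of_eval_ne_zero (hQ.isHomogeneous l) (hg l) hc (mem_branches.not.1 hl)
    have hzero := congrArg (eval p) hsum
    rw [map_sum, map_zero, Finset.sum_congr rfl fun l _ => hgi l, Finset.sum_add_distrib,
      ← Finset.mul_sum] at hzero
    simpa only [Finset.sum_ite_mem, Finset.univ_inter, Finset.sum_const, nsmul_eq_mul] using hzero
  have hc0 : (2 * ∑ i, n i - (branches Q p).card * (r + 2) : ℂ) * c = 0 := by
    push_cast
    linear_combination 2 * hcofactors - (branches Q p).card * htrace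
  rw [congrFun hc k, Pi.smul_apply, smul_eq_mul, ← mul_assoc, hc0, zero_mul]

end IsTransversalArrangement

end Arrangement

section VanishingOrder

open Topology Asymptotics ComplexConjugate

variable {σ κ : Type*} [Fintype σ] [Fintype κ] {P : κ → MvPolynomial σ ℂ} {n : κ → ℕ}
  {R : MvPolynomial σ ℂ} {m : ℕ} {p : σ → ℂ}

-- Compare the values at `z` and at its projection `c z • p` to the line through `p`, where all the
-- polynomials vanish; together with the coordinate `c` along that line, the `P k` are local
-- coordinates at `p`.
lemma isBigO_eval_of_linearIndependent_gradAt (hp : p ≠ 0)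
    (hcard : Fintype.card σ = Fintype.card κ + 1) (hP : ∀ k, (P k).IsHomogeneous (n k))
    (hPp : ∀ k, eval p (P k) = 0) (hind : LinearIndependent ℂ fun k => gradAt (P k) p)
    (hR : R.IsHomogeneous m) (hRp : eval p R = 0) :
    (fun z => eval z R) =O[𝓝 p] fun z k => eval z (P k) := by
  obtain ⟨i, hi⟩ := Function.ne_iff.1 hp
  set c : (σ → ℂ) →L[ℂ] ℂ := (p i)⁻¹ • ContinuousLinearMap.proj i
  have hcp : c p = 1 := inv_mul_cancel₀ hi
  have hline : Filter.Tendsto (fun z => (z, c z • p)) (𝓝 p) (𝓝 (p, p)) := by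
    have hcont : Continuous fun z => (z, c z • p) := by fun_prop
    simpa [hcp] using hcont.tendsto p
  set Φ' : (σ → ℂ) →L[ℂ] (κ → ℂ) × ℂ := (ContinuousLinearMap.pi fun k => diffAt (P k) p).prod c
  have hΦ : HasStrictFDerivAt (fun z => (fun k => eval z (P k), c z)) Φ' p :=
    (hasStrictFDerivAt_pi.2 fun k => hasStrictFDerivAt_eval (P k) p).prodMk c.hasStrictFDerivAt
  have hinj : Function.Injective Φ' := by
    refine (injective_iff_map_eq_zero Φ').2 fun w hw => ?_
    obtain ⟨hPw, hcw⟩ := Prod.ext_iff.1 hw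
    obtain ⟨b, rfl⟩ := exists_eq_smul_of_forall_dotProduct_eq_zero hind hcard hp
      (fun k => by rw [dotProduct_comm, dotProduct_gradAt_self (hP k), hPp, mul_zero])
      (fun k => (diffAt_apply (P k) p w).symm.trans (congrFun hPw k))
    have hb : b = 0 := by simpa [Φ', hcp] using hcw
    rw [hb, zero_smul]
  have hproj : (fun z => z - c z • p) =O[𝓝 p] fun z k => eval z (P k) := by
    refine (((hΦ.isTheta_sub (LinearMap.isClosedEmbedding_of_injective
      (f := Φ'.toLinearMap) (LinearMap.ker_eq_bot.2 hinj)).isInducing).symm.isBigO.comp_tendsto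
        hline).trans (isBigO_of_le _ fun z => ?_))
    simp [Prod.norm_def, Pi.norm_def, hcp, eval_smul_of_isHomogeneous (hP _), hPp]
  refine IsBigO.trans ?_ hproj
  simpa [Function.comp_def, eval_smul_of_isHomogeneous hR, hRp] using
    (hasStrictFDerivAt_eval R p).isBigO_sub.comp_tendsto hline

end VanishingOrder

section LowerBound

open ENNReal Topology Asymptotics ComplexConjugate

variable {σ : Type*} [Fintype σ] {b : σ → MvPolynomial σ ℂ} {p : σ → ℂ} {r : ℕ}

lemma exists_enorm_le_mul_of_isBigO {α E F : Type*} [SeminormedAddCommGroup E]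
    [SeminormedAddCommGroup F] {l : Filter α} {u : α → E} {v : α → F} (huv : u =O[l] v) :
    ∃ K : ℝ≥0∞, K ≠ ∞ ∧ ∀ᶠ z in l, ‖u z‖ₑ ≤ K * ‖v z‖ₑ := by
  obtain ⟨c, hc⟩ := huv.bound
  refine ⟨ENNReal.ofReal c, ofReal_ne_top, hc.mono fun z hz => ?_⟩
  rw [← ofReal_norm, ← ofReal_norm, ← ofReal_mul' (norm_nonneg _)]
  exact ofReal_le_ofReal hz

lemma isHomogeneous_divergence (hb : ∀ k, (b k).IsHomogeneous r) :
    (divergence b).IsHomogeneous (r - 1) :=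
  IsHomogeneous.sum _ _ _ fun k _ => (hb k).pderiv

lemma divergence_X_mul (b : σ → MvPolynomial σ ℂ) (j : σ) :
    divergence (fun i => X j * b i) = b j + X j * divergence b := by
  simp only [divergence, pderiv_mul, Finset.sum_add_distrib, Finset.mul_sum]
  simp [pderiv_X, Pi.single_apply]

lemma isBigO_radialPairing {v : (σ → ℂ) → ℝ} (hb : ∀ k, (fun z => eval z (b k)) =O[𝓝 p] v) :
    radialPairing b =O[𝓝 p] v := by
  have hsum : (fun z => ∑ k, eval z (b k) * conj (z k)) =O[𝓝 p] v := by
    refine IsBigO.fun_sum fun k _ => ?_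
    have hconj : (fun z : σ → ℂ => conj (z k)) =O[𝓝 p] fun _ => (1 : ℝ) :=
      (Complex.continuous_conj.comp (continuous_apply k)).continuousAt.isBigO_one ℝ
    simpa using (hb k).mul hconj
  exact hsum

lemma exists_eventually_enorm_divergence_mul_radialPairing_le (b : σ → MvPolynomial σ ℂ)
    (p : σ → ℂ) : ∃ K : ℝ≥0∞, K ≠ ∞ ∧
      ∀ᶠ z in 𝓝 p, ‖eval z (divergence b)‖ₑ * ‖radialPairing b z‖ₑ ≤ K := by
  have hcont : Continuous fun z => eval z (divergence b) * radialPairing b z :=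
    (continuous_eval _).mul (contDiff_radialPairing b (n := 0)).continuous
  simpa using exists_enorm_le_mul_of_isBigO (hcont.continuousAt (x := p).isBigO_one ℝ)

namespace IsTransversalArrangement

variable {ι : Type*} {Q : ι → MvPolynomial (Fin 3) ℂ} {n : ι → ℕ} {p : Fin 3 → ℂ}
  {b : Fin 3 → MvPolynomial (Fin 3) ℂ} {s e : ℝ}

lemma isBigO_eval (hQ : IsTransversalArrangement Q n) (hp : p ≠ 0) {i j : ι} (hij : i ≠ j)
    (hi : eval p (Q i) = 0) (hj : eval p (Q j) = 0) {R : MvPolynomial (Fin 3) ℂ}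
    (hR : R.IsHomogeneous r) (hRp : eval p R = 0) :
    (fun z => eval z R) =O[𝓝 p] fun z => ‖eval z (Q i)‖ + ‖eval z (Q j)‖ := by
  have hind : LinearIndependent ℂ fun k => gradAt (![Q i, Q j] k) p := by
    convert hQ.linearIndependent_pair hp hij hi hj using 1
    ext k : 1
    fin_cases k <;> rfl
  refine (isBigO_eval_of_linearIndependent_gradAt (n := ![n i, n j]) hp (by simp)
    (Fin.forall_fin_two.2 ⟨hQ.isHomogeneous i, hQ.isHomogeneous j⟩)
    (Fin.forall_fin_two.2 ⟨hi, hj⟩) hind hR hRp).trans (isBigO_of_le _ fun z => ?_)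
  rw [Real.norm_of_nonneg (by positivity), pi_norm_le_iff_of_nonneg (by positivity)]
  exact Fin.forall_fin_two.2 ⟨by simp, by simp⟩

variable [Fintype ι]

lemma linearIndepOn_gradAt_of_subset_branches (hQ : IsTransversalArrangement Q n) (hp : p ≠ 0)
    {S : Finset ι} (hS : S ⊆ branches Q p) (hcard : S.card ≤ 2) :
    LinearIndepOn ℂ (fun i => gradAt (Q i) p) (S : Set ι) := by
  have hzero (i) (hi : i ∈ S) : eval p (Q i) = 0 := mem_branches.1 (hS hi)
  obtain hS0 | hS1 | hS2 : S.card = 0 ∨ S.card = 1 ∨ S.card = 2 := by omega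
  · simp [Finset.card_eq_zero.1 hS0]
  · obtain ⟨i, rfl⟩ := Finset.card_eq_one.1 hS1
    simpa using hQ.linearIndepOn_gradAt p hp i i (hzero i (by simp)) (hzero i (by simp))
  · obtain ⟨i, j, -, rfl⟩ := Finset.card_eq_two.1 hS2
    simpa using hQ.linearIndepOn_gradAt p hp i j (hzero i (by simp)) (hzero j (by simp))

lemma finiteLIntegralAt_defectBound_of_forall_pair (hQ : IsTransversalArrangement Q n)
    (hp : p ≠ 0) (hs : 0 ≤ s) (hs1 : s < 1) (he : 0 ≤ e)
    (hcard : (branches Q p).card * (2 * s) < 4 + e)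
    (hpair : ∀ i ∈ branches Q p, ∀ j ∈ branches Q p, i ≠ j → ∃ K ≠ ∞, ∀ᶠ z in 𝓝 p,
      ‖eval z (divergence b)‖ₑ * ‖radialPairing b z‖ₑ ≤
        K * (‖eval z (Q i)‖ₑ + ‖eval z (Q j)‖ₑ) ^ e) :
    FiniteLIntegralAt (defectBound (∏ i, Q i) b s) p := by
  obtain ⟨κ, hκs, hκ2, hκcard⟩ : ∃ κ, 2 * s ≤ κ ∧ κ < 2 ∧
      (branches Q p).card * (2 * s) ≤ 2 * κ + e :=
    ⟨max (2 * s) (((branches Q p).card * (2 * s) - e) / 2), le_max_left _ _,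
      max_lt (by linarith) (by linarith),
      by linarith [le_max_right (2 * s) (((branches Q p).card * (2 * s) - e) / 2)]⟩
  exact FiniteLIntegralAt.mul_inv_prod_rpow (by positivity) <|
    finiteLIntegralAt_mul_prod_inv_rpow (fun i => mem_branches.1)
      (fun S => hQ.linearIndepOn_gradAt_of_subset_branches hp) he (by positivity) hκs hκ2 hκcard
      (exists_eventually_enorm_divergence_mul_radialPairing_le b p) hpair

lemma finiteLIntegralAt_defectBound (hQ : IsTransversalArrangement Q n) (hp : p ≠ 0) (hs : 0 ≤ s)
    (hs1 : s < 1) (hcard : (branches Q p).card * s < 2) :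
    FiniteLIntegralAt (defectBound (∏ i, Q i) b s) p :=
  hQ.finiteLIntegralAt_defectBound_of_forall_pair hp hs hs1 le_rfl (by linarith) fun _ _ _ _ _ => by
    simpa using exists_eventually_enorm_divergence_mul_radialPairing_le b p

lemma finiteLIntegralAt_defectBound_of_eval_eq_zero (hQ : IsTransversalArrangement Q n)
    (hb : ∀ k, (b k).IsHomogeneous r) (hp : p ≠ 0) (hbp : ∀ k, eval p (b k) = 0)
    (hdiv : eval p (divergence b) = 0) (hs : 0 ≤ s) (hs1 : s < 1)
    (hcard : (branches Q p).card * s < 3) :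
    FiniteLIntegralAt (defectBound (∏ i, Q i) b s) p := by
  refine hQ.finiteLIntegralAt_defectBound_of_forall_pair (e := 2) hp hs hs1 zero_le_two
    (by linarith) fun i hi j hj hij => ?_
  rw [mem_branches] at hi hj
  have hdivO := hQ.isBigO_eval hp hij hi hj (isHomogeneous_divergence hb) hdiv
  have hpairO := isBigO_radialPairing fun k => hQ.isBigO_eval hp hij hi hj (hb k) (hbp k)
  obtain ⟨K, hK, hle⟩ := exists_enorm_le_mul_of_isBigO (hdivO.mul hpairO)
  refine ⟨K, hK, hle.mono fun z hz => ?_⟩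
  have hadd : ‖‖eval z (Q i)‖ + ‖eval z (Q j)‖‖ₑ ≤ ‖eval z (Q i)‖ₑ + ‖eval z (Q j)‖ₑ := by
    simpa using enorm_add_le ‖eval z (Q i)‖ ‖eval z (Q j)‖
  rw [← enorm_mul, ENNReal.rpow_two, sq]
  refine hz.trans ?_
  rw [enorm_mul]
  gcongr

end IsTransversalArrangement

end LowerBound

section SyzygyDegree

namespace IsTransversalArrangement

variable {ι : Type*} [Fintype ι] {Q : ι → MvPolynomial (Fin 3) ℂ} {n : ι → ℕ}
  {a : Fin 3 → MvPolynomial (Fin 3) ℂ} {m r : ℕ}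

lemma isHomogeneous_prod (hQ : IsTransversalArrangement Q n) :
    (∏ i, Q i).IsHomogeneous (∑ i, n i) :=
  IsHomogeneous.prod _ _ _ fun i _ => hQ.isHomogeneous i

lemma card_branches_le_sum (hQ : IsTransversalArrangement Q n) (p : Fin 3 → ℂ) :
    (branches Q p).card ≤ ∑ i, n i := by
  have hpos (i) (hi : i ∈ branches Q p) : 1 ≤ n i := by
    rw [mem_branches] at hi
    refine Nat.one_le_iff_ne_zero.2 fun hni => hQ.ne_zero i ?_
    have hconst := totalDegree_eq_zero_iff_eq_C.1
      (Nat.le_zero.1 (hni ▸ (hQ.isHomogeneous i).totalDegree_le))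
    rw [hconst, eval_C] at hi
    rw [hconst, hi, C_0]
  calc (branches Q p).card = ∑ _i ∈ branches Q p, 1 := Finset.card_eq_sum_ones _
    _ ≤ ∑ i ∈ branches Q p, n i := Finset.sum_le_sum hpos
    _ ≤ ∑ i, n i := Finset.sum_le_univ_sum_of_nonneg fun i => Nat.zero_le _

lemma divergence_eq_zero (hQ : IsTransversalArrangement Q n) (hm : 3 ≤ m)
    (hbranches : ∀ p ≠ 0, (branches Q p).card ≤ m) (hr : m * (r + 2) < 2 * ∑ i, n i)
    (ha : ∀ k, (a k).IsHomogeneous r) (hsyz : ∑ k, a k * pderiv k (∏ i, Q i) = 0) :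
    divergence a = 0 := by
  have hrN : 3 * (r + 2) < 2 * ∑ i, n i := (Nat.mul_le_mul_right _ hm).trans_lt hr
  set N := ∑ i, n i
  have hN : (0 : ℝ) < N := by norm_cast; omega
  refine divergence_eq_zero_of_finiteLIntegralAt (s := (r + 2) / N) hQ.isHomogeneous_prod ha hsyz
    (by positivity) ?_ fun p hp => hQ.finiteLIntegralAt_defectBound hp (by positivity) ?_ ?_
  · rw [div_mul_cancel₀ _ hN.ne']
    norm_num
    ring
  · rw [div_lt_one hN]
    norm_cast
    omega
  · rw [← mul_div_assoc, div_lt_iff₀ hN]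
    exact_mod_cast (Nat.mul_le_mul_right _ (hbranches p hp)).trans_lt hr

lemma eval_eq_zero_of_three_le_card_branches (hQ : IsTransversalArrangement Q n)
    (ha : ∀ k, (a k).IsHomogeneous r) (hsyz : ∑ k, a k * pderiv k (∏ i, Q i) = 0)
    (hdiv : divergence a = 0) {p : Fin 3 → ℂ} (hp : p ≠ 0) (hcard : 3 ≤ (branches Q p).card)
    (hr : (branches Q p).card * (r + 2) < 2 * ∑ i, n i) (k : Fin 3) : eval p (a k) = 0 := by
  refine (mul_eq_zero.1 (hQ.mul_eval_eq_zero_of_three_le_card_branches ha hsyz hdiv hp hcard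
    k)).resolve_left (sub_ne_zero.2 ?_)
  exact_mod_cast hr.ne'

-- Since `div a = 0`, the field `X j • a` has divergence `a j`, so both it and its divergence vanish
-- at the points of multiplicity at least three.
lemma finiteLIntegralAt_defectBound_X_mul (hQ : IsTransversalArrangement Q n)
    (hrN : r + 3 < ∑ i, n i) (ha : ∀ k, (a k).IsHomogeneous r)
    (hsyz : ∑ k, a k * pderiv k (∏ i, Q i) = 0) (hdiv : divergence a = 0) {p : Fin 3 → ℂ}
    (hp : p ≠ 0) (hr : (branches Q p).card * (r + 2) < 2 * ∑ i, n i) (j : Fin 3) :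
    FiniteLIntegralAt
      (defectBound (∏ i, Q i) (fun k => X j * a k) ((r + 3) / ↑(∑ i, n i))) p := by
  have hN : (0 : ℝ) < ↑(∑ i, n i) := by norm_cast; omega
  have hs1 : (r + 3 : ℝ) / ↑(∑ i, n i) < 1 := by
    rw [div_lt_one hN]
    exact_mod_cast hrN
  rcases lt_or_ge (branches Q p).card 3 with hcard | hcard
  · refine hQ.finiteLIntegralAt_defectBound hp (by positivity) hs1 ?_
    rw [← mul_div_assoc, div_lt_iff₀ hN]
    have hcard2 : (branches Q p).card * (r + 3) ≤ 2 * (r + 3) := Nat.mul_le_mul_right _ (by omega)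
    exact_mod_cast hcard2.trans_lt (by omega)
  have hap := hQ.eval_eq_zero_of_three_le_card_branches ha hsyz hdiv hp hcard hr
  refine hQ.finiteLIntegralAt_defectBound_of_eval_eq_zero
    (fun k => (isHomogeneous_X ℂ j).mul (ha k)) hp (by simp [hap])
    (by rw [divergence_X_mul, hdiv, mul_zero, add_zero, hap]) (by positivity) hs1 ?_
  rw [← mul_div_assoc, div_lt_iff₀ hN]
  have hcard3 : (branches Q p).card * (r + 3) < 3 * ∑ i, n i := by
    linarith [hQ.card_branches_le_sum p]
  exact_mod_cast hcard3

lemma eq_zero_of_divergence_eq_zero (hQ : IsTransversalArrangement Q n) (hm : 3 ≤ m)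
    (hbranches : ∀ p ≠ 0, (branches Q p).card ≤ m) (hr : m * (r + 2) < 2 * ∑ i, n i)
    (ha : ∀ k, (a k).IsHomogeneous r) (hsyz : ∑ k, a k * pderiv k (∏ i, Q i) = 0)
    (hdiv : divergence a = 0) (j : Fin 3) : a j = 0 := by
  have hrN : 3 * (r + 2) < 2 * ∑ i, n i := (Nat.mul_le_mul_right _ hm).trans_lt hr
  have hN : (0 : ℝ) < ↑(∑ i, n i) := by norm_cast; omega
  rw [show a j = divergence fun k => X j * a k by rw [divergence_X_mul, hdiv, mul_zero, add_zero]]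
  refine divergence_eq_zero_of_finiteLIntegralAt hQ.isHomogeneous_prod
    (fun k => (isHomogeneous_X ℂ j).mul (ha k)) ?_ (by positivity) ?_ fun p hp =>
      hQ.finiteLIntegralAt_defectBound_X_mul (by omega) ha hsyz hdiv hp
        ((Nat.mul_le_mul_right _ (hbranches p hp)).trans_lt hr) j
  · simp only [mul_assoc, ← Finset.mul_sum, hsyz, mul_zero]
  · rw [div_mul_cancel₀ _ hN.ne']
    norm_num
    ring

lemma two_mul_sum_le_mul_add_two (hQ : IsTransversalArrangement Q n) (hm : 3 ≤ m)
    (hbranches : ∀ p ≠ 0, (branches Q p).card ≤ m) (ha : ∀ k, (a k).IsHomogeneous r) (ha0 : a ≠ 0)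
    (hsyz : ∑ k, a k * pderiv k (∏ i, Q i) = 0) : 2 * ∑ i, n i ≤ m * (r + 2) := by
  by_contra! hr
  exact ha0 <| funext <| hQ.eq_zero_of_divergence_eq_zero hm hbranches hr ha hsyz
    (hQ.divergence_eq_zero hm hbranches hr ha hsyz)

end IsTransversalArrangement

end SyzygyDegree

section Saturation

variable {σ K : Type*} [Fintype σ] [Field K]

-- The linear forms lying in one of the finitely many associated primes of `J` form a finite union
-- of proper subspaces: an associated prime containing all of them would be the colon ideal of a
-- witness against saturation.
lemma exists_forall_mem_of_linearForm_mul_mem [Infinite K] {J : Ideal (MvPolynomial σ K)}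
    (hJ : ∀ g, (∀ i, X i * g ∈ J) → g ∈ J) :
    ∃ v : σ → K, ∀ g, linearForm v * g ∈ J → g ∈ J := by
  have hfin := associatedPrimes.finite (MvPolynomial σ K) (MvPolynomial σ K ⧸ J)
  let Φ : (σ → K) →ₗ[K] MvPolynomial σ K := Fintype.linearCombination K X
  have hΦ (v) : Φ v = linearForm v := by
    simp [Φ, Fintype.linearCombination_apply, linearForm, smul_eq_C_mul]
  let V (P : Ideal (MvPolynomial σ K)) : Submodule K (σ → K) := (P.restrictScalars K).comap Φ
  have htop : ⊤ ∉ hfin.toFinset.image V := by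
    rw [Finset.mem_image]
    rintro ⟨P, hP, hV⟩
    rw [Set.Finite.mem_toFinset, AssociatedPrimes.mem_iff, isAssociatedPrime_iff] at hP
    obtain ⟨hprime, x, rfl⟩ := hP
    obtain ⟨g, rfl⟩ := Ideal.Quotient.mk_surjective x
    refine (Ideal.ne_top_iff_one _).1 hprime.ne_top ?_
    rw [Submodule.mem_colon_singleton, one_smul, Submodule.mem_bot, Ideal.Quotient.eq_zero_iff_mem]
    refine hJ g fun i => Ideal.Quotient.eq_zero_iff_mem.1 ?_
    have hi : Pi.single i 1 ∈ V _ := hV ▸ Submodule.mem_top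
    change (X i : MvPolynomial σ K) • Ideal.Quotient.mk J g = 0
    simpa [V, Φ, Fintype.linearCombination_apply_single, Submodule.mem_colon_singleton] using hi
  obtain ⟨v, hv⟩ := (Set.ne_univ_iff_exists_notMem _).1
    (Subspace.biUnion_ne_univ_of_top_notMem htop)
  refine ⟨v, fun g hg => ?_⟩
  by_contra hgJ
  have hzero : linearForm v ∈ {r | ∃ x : MvPolynomial σ K ⧸ J, x ≠ 0 ∧ r • x = 0} :=
    ⟨Ideal.Quotient.mk J g, hgJ ∘ Ideal.Quotient.eq_zero_iff_mem.1,
      Ideal.Quotient.eq_zero_iff_mem.2 hg⟩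
  rw [← biUnion_associatedPrimes_eq_zero_divisors, ← hΦ] at hzero
  obtain ⟨P, hP, hvP⟩ := Set.mem_iUnion₂.1 hzero
  exact hv (Set.mem_biUnion (Finset.mem_image_of_mem V (hfin.mem_toFinset.2 hP)) hvP)

end Saturation

section HomogeneousSyzygy

open Module

variable {σ κ K : Type*} [Fintype κ] [Field K] {P : MvPolynomial σ K}
  {F : κ → MvPolynomial σ K} {D k l m n : ℕ}

lemma finrank_homogeneousSubmodule [Fintype σ] (n : ℕ) :
    finrank K (homogeneousSubmodule σ K n) = (Fintype.card σ).multichoose n := by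
  have hdegree : {d : σ →₀ ℕ | d.degree = n} = ((univ : Finset σ).finsuppAntidiag n : Set _) := by
    ext d
    simp [Finsupp.degree_eq_sum]
  rw [homogeneousSubmodule_eq_finsupp_supported, hdegree,
    (AddMonoidAlgebra.supportedEquivFinsupp _).finrank_eq, finrank_finsupp_self]
  simp [Finset.card_finsuppAntidiag_nat_eq_multichoose]

attribute [local instance] MvPolynomial.gradedAlgebra in
lemma homogeneousComponent_add_mul (hP : P.IsHomogeneous m) (k : ℕ) (R : MvPolynomial σ K) :
    homogeneousComponent (k + m) (R * P) = homogeneousComponent k R * P := by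
  have hdecompose (i : ℕ) (R : MvPolynomial σ K) :
      (DirectSum.decompose (homogeneousSubmodule σ K) R i : MvPolynomial σ K) =
        homogeneousComponent i R :=
    decomposition.decompose'_apply R i
  rw [← hdecompose, ← hdecompose]
  exact DirectSum.coe_decompose_mul_add_of_right_mem _ hP

lemma exists_isHomogeneous_of_mem_span_range (hF : ∀ i, (F i).IsHomogeneous D)
    {g : MvPolynomial σ K} (hg : g.IsHomogeneous (k + D)) (hgF : g ∈ Ideal.span (Set.range F)) :
    ∃ b : κ → MvPolynomial σ K, (∀ i, (b i).IsHomogeneous k) ∧ ∑ i, b i * F i = g := by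
  obtain ⟨b, hb⟩ := Ideal.mem_span_range_iff_exists_fun.1 hgF
  refine ⟨fun i => homogeneousComponent k (b i),
    fun i => homogeneousComponent_isHomogeneous k (b i), ?_⟩
  simp only [← homogeneousComponent_add_mul (hF _), ← map_sum, hb, homogeneousComponent_eq_self hg]

/-- Multiplication by a homogeneous polynomial, as a map between graded pieces. -/
noncomputable def mulHomogeneous (hP : P.IsHomogeneous m) (hl : n + m = l) :
    homogeneousSubmodule σ K n →ₗ[K] homogeneousSubmodule σ K l :=
  (LinearMap.mulRight K P).restrict fun _ hR => hl ▸ IsHomogeneous.mul hR hP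

/-- The map sending `b` to `∑ i, b i * F i`, for `b i` homogeneous of a fixed degree. -/
noncomputable def combinationHomogeneous (hF : ∀ i, (F i).IsHomogeneous D) (hl : n + D = l) :
    (κ → homogeneousSubmodule σ K n) →ₗ[K] homogeneousSubmodule σ K l :=
  ∑ i, mulHomogeneous (hF i) hl ∘ₗ LinearMap.proj i

lemma coe_combinationHomogeneous (hF : ∀ i, (F i).IsHomogeneous D) (hl : n + D = l)
    (b : κ → homogeneousSubmodule σ K n) :
    (combinationHomogeneous hF hl b : MvPolynomial σ K) = ∑ i, (b i : MvPolynomial σ K) * F i := by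
  simp [combinationHomogeneous, mulHomogeneous]

lemma finrank_le_of_ker_le_range {U V W : Type*} [AddCommGroup U] [Module K U]
    [FiniteDimensional K U] [AddCommGroup V] [Module K V] [FiniteDimensional K V] [AddCommGroup W]
    [Module K W] [FiniteDimensional K W] {Θ : U →ₗ[K] V} {Ψ : V →ₗ[K] W}
    (h : LinearMap.ker Ψ ≤ LinearMap.range Θ) : finrank K V ≤ finrank K U + finrank K W := by
  calc finrank K V = finrank K (LinearMap.range Ψ) + finrank K (LinearMap.ker Ψ) :=
        (LinearMap.finrank_range_add_finrank_ker Ψ).symm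
    _ ≤ finrank K W + finrank K (LinearMap.range Θ) :=
        add_le_add (Submodule.finrank_le _) (Submodule.finrank_mono h)
    _ ≤ finrank K U + finrank K W := by
        rw [add_comm]
        exact Nat.add_le_add_right (LinearMap.finrank_range_le Θ) _

end HomogeneousSyzygy

section PlaneSyzygy

open Module

variable {κ K : Type*} [Fintype κ] [Field K] {F : κ → MvPolynomial (Fin 3) K}
  {h : MvPolynomial (Fin 3) K} {D k : ℕ}

lemma finrank_homogeneousSubmodule_fin_three_succ (n : ℕ) :
    finrank K (homogeneousSubmodule (Fin 3) K (n + 1)) =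
      finrank K (homogeneousSubmodule (Fin 3) K n) + (n + 2) := by
  rw [finrank_homogeneousSubmodule, finrank_homogeneousSubmodule, Fintype.card_fin,
    Nat.multichoose_succ_succ, Nat.multichoose_two]
  ring

-- Otherwise multiples of `h` would be the only relations modulo `h`, against the dimension count.
lemma exists_combination_eq_mul_of_lt (hF : ∀ i, (F i).IsHomogeneous D) (hh : h.IsHomogeneous 1)
    (hlt : k + D + 2 < Fintype.card κ * (k + 2)) :
    ∃ (a : κ → MvPolynomial (Fin 3) K) (g : MvPolynomial (Fin 3) K),
      (∀ i, (a i).IsHomogeneous (k + 1)) ∧ g.IsHomogeneous (k + D) ∧ ∑ i, a i * F i = g * h ∧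
      ∀ b : κ → MvPolynomial (Fin 3) K, (∀ i, (b i).IsHomogeneous k) → ∑ i, b i * F i = g →
        ∃ i, a i ≠ b i * h := by
  let Ψ := (combinationHomogeneous hF (Nat.add_right_comm k 1 D)).coprod (-mulHomogeneous hh rfl)
  let Θ : _ →ₗ[K] (κ → homogeneousSubmodule (Fin 3) K (k + 1)) × _ :=
    ((mulHomogeneous hh rfl).compLeft κ).prod (combinationHomogeneous hF rfl)
  have hfin (n) : FiniteDimensional K (homogeneousSubmodule (Fin 3) K n) :=
    Module.Finite.iff_fg.2 (homogeneousSubmodule_fg _ _ n)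
  have hker : ¬LinearMap.ker Ψ ≤ LinearMap.range Θ := fun hle => by
    have hfinrank := finrank_le_of_ker_le_range hle
    simp only [finrank_prod, finrank_pi_fintype, Finset.sum_const, Finset.card_univ, smul_eq_mul,
      finrank_homogeneousSubmodule_fin_three_succ, mul_add] at hfinrank
    linarith
  obtain ⟨⟨a, g⟩, hΨ, hΘ⟩ := SetLike.not_le_iff_exists.1 hker
  refine ⟨fun i => a i, g, fun i => (a i).2, g.2, ?_, fun b hb hbg => ?_⟩
  · have hcoe := congrArg Subtype.val (LinearMap.mem_ker.1 hΨ)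
    simpa [Ψ, coe_combinationHomogeneous, mulHomogeneous, add_neg_eq_zero] using hcoe
  · by_contra! hab
    refine hΘ ⟨fun i => ⟨b i, hb i⟩, Prod.ext (funext fun i => Subtype.ext (hab i).symm) ?_⟩
    exact Subtype.ext ((coe_combinationHomogeneous hF rfl _).trans hbg)

theorem exists_syzygy_of_saturated [Infinite K] (hF : ∀ i, (F i).IsHomogeneous D)
    (hsat : ∀ g, (∀ i, X i * g ∈ Ideal.span (Set.range F)) → g ∈ Ideal.span (Set.range F))
    (hlt : k + D + 2 < Fintype.card κ * (k + 2)) :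
    ∃ a : κ → MvPolynomial (Fin 3) K,
      (∀ i, (a i).IsHomogeneous (k + 1)) ∧ a ≠ 0 ∧ ∑ i, a i * F i = 0 := by
  obtain ⟨v, hv⟩ := exists_forall_mem_of_linearForm_mul_mem hsat
  obtain ⟨a, g, ha, hg, hag, hne⟩ :=
    exists_combination_eq_mul_of_lt hF (isHomogeneous_linearForm v) hlt
  have hgF : g ∈ Ideal.span (Set.range F) :=
    hv g (mul_comm g _ ▸ hag ▸ Ideal.mem_span_range_iff_exists_fun.2 ⟨a, rfl⟩)
  obtain ⟨b, hb, hbg⟩ := exists_isHomogeneous_of_mem_span_range hF hg hgF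
  refine ⟨fun i => a i - b i * linearForm v,
    fun i => (ha i).sub ((hb i).mul (isHomogeneous_linearForm v)), fun hzero => ?_, ?_⟩
  · obtain ⟨i, hi⟩ := hne b hb hbg
    exact hi (sub_eq_zero.1 (congrFun hzero i))
  · simp only [sub_mul, Finset.sum_sub_distrib, mul_right_comm _ (linearForm v), ← Finset.sum_mul,
      hag, hbg, sub_self]

end PlaneSyzygy

section MinimalDegree

variable {f : MvPolynomial (Fin 3) ℂ} {a : Fin 3 → MvPolynomial (Fin 3) ℂ} {N r : ℕ}

lemma jacobianIdeal_eq_span_range (f : MvPolynomial (Fin 3) ℂ) :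
    jacobianIdeal f = Ideal.span (Set.range fun k => pderiv k f) := by
  rw [jacobianIdeal]
  congr 1
  ext g
  simp [Fin.exists_fin_succ, eq_comm]

lemma mdr_eq_sInf (f : MvPolynomial (Fin 3) ℂ) :
    mdr f = sInf {r | ∃ a : Fin 3 → MvPolynomial (Fin 3) ℂ,
      (∀ k, (a k).IsHomogeneous r) ∧ a ≠ 0 ∧ ∑ k, a k * pderiv k f = 0} := by
  rw [mdr]
  congr 1
  ext r
  constructor
  · rintro ⟨a, b, c, ha, hb, hc, hne, hsyz⟩
    exact ⟨![a, b, c], by simp [Fin.forall_fin_succ, ha, hb, hc],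
      by simpa [funext_iff, Fin.forall_fin_succ] using hne,
      by simpa [Fin.sum_univ_three] using hsyz⟩
  · rintro ⟨a, ha, ha0, hsyz⟩
    refine ⟨a 0, a 1, a 2, ha 0, ha 1, ha 2, fun ⟨h0, h1, h2⟩ => ha0 ?_, by
      simpa [Fin.sum_univ_three] using hsyz⟩
    ext1 k
    fin_cases k
    exacts [h0, h1, h2]

lemma isLeast_mdr (ha : ∀ k, (a k).IsHomogeneous r) (ha0 : a ≠ 0)
    (hsyz : ∑ k, a k * pderiv k f = 0) :
    IsLeast {r | ∃ a : Fin 3 → MvPolynomial (Fin 3) ℂ,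
      (∀ k, (a k).IsHomogeneous r) ∧ a ≠ 0 ∧ ∑ k, a k * pderiv k f = 0} (mdr f) :=
  mdr_eq_sInf f ▸ ⟨Nat.sInf_mem ⟨r, a, ha, ha0, hsyz⟩, fun _ => Nat.sInf_le⟩

lemma exists_syzygy_of_free (hf : f.IsHomogeneous N) (hN : 3 ≤ N)
    (hfree : ∀ g, (∀ i, X i * g ∈ jacobianIdeal f) → g ∈ jacobianIdeal f) :
    ∃ a : Fin 3 → MvPolynomial (Fin 3) ℂ,
      (∀ k, (a k).IsHomogeneous ((N - 1) / 2)) ∧ a ≠ 0 ∧ ∑ k, a k * pderiv k f = 0 := by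
  obtain ⟨k, hk⟩ : ∃ k, (N - 1) / 2 = k + 1 := Nat.exists_eq_succ_of_ne_zero (by omega)
  rw [jacobianIdeal_eq_span_range] at hfree
  rw [hk]
  exact exists_syzygy_of_saturated (fun i => hf.pderiv) hfree (by rw [Fintype.card_fin]; omega)

end MinimalDegree

theorem mdr_of_free_conic_line_general {ι : Type*} [Fintype ι] {Q : ι → MvPolynomial (Fin 3) ℂ}
    {n : ι → ℕ} {m : ℕ} (hQ : IsTransversalArrangement Q n) (hN : 3 ≤ ∑ i, n i) (hm : 3 ≤ m)
    (hbranches : ∀ p ≠ 0, (branches Q p).card ≤ m)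
    (hfree : ∀ g, (∀ i, X i * g ∈ jacobianIdeal (∏ i, Q i)) → g ∈ jacobianIdeal (∏ i, Q i)) :
    2 * ∑ i, n i ≤ m * (mdr (∏ i, Q i) + 2) ∧ mdr (∏ i, Q i) ≤ (∑ i, n i - 1) / 2 := by
  obtain ⟨a, ha, ha0, hsyz⟩ := exists_syzygy_of_free hQ.isHomogeneous_prod hN hfree
  obtain ⟨⟨b, hb, hb0, hbsyz⟩, hle⟩ := isLeast_mdr ha ha0 hsyz
  exact ⟨hQ.two_mul_sum_le_mul_add_two hm hbranches hb hb0 hbsyz, hle ⟨a, ha, ha0, hsyz⟩⟩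

section ConicLine

variable {d : ℕ} {q : MvPolynomial (Fin 3) ℂ} {ℓ : Fin d → MvPolynomial (Fin 3) ℂ}

/-- The components of a conic-line arrangement, indexed by `none` for the conic `q` and by `some i`
for the line `ℓ i`. -/
def conicLine (q : MvPolynomial (Fin 3) ℂ) (ℓ : Fin d → MvPolynomial (Fin 3) ℂ) :
    Option (Fin d) → MvPolynomial (Fin 3) ℂ :=
  fun o => o.elim q ℓ

lemma prod_conicLine : ∏ o, conicLine q ℓ o = q * ∏ i, ℓ i := by
  simp [Fintype.prod_option, conicLine]

lemma card_branches_conicLine (p : Fin 3 → ℂ) :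
    (branches (conicLine q ℓ) p).card =
      (univ.filter fun i => eval p (ℓ i) = 0).card + if eval p q = 0 then 1 else 0 := by
  rw [branches, Finset.card_filter, Finset.card_filter, Fintype.sum_option, add_comm]
  rfl

lemma linearIndepOn_pair_gradAt {ι : Type*} {Q : ι → MvPolynomial (Fin 3) ℂ} {p : Fin 3 → ℂ}
    {i j : ι} (hij : i ≠ j) (hi : gradAt (Q i) p ≠ 0) (hj : (Q j).IsHomogeneous 1)
    (hne : ∀ c : ℂ, Q j ≠ c • linearForm (gradAt (Q i) p)) :
    LinearIndepOn ℂ (fun k => gradAt (Q k) p) {i, j} := by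
  refine (linearIndepOn_pair_iff _ hij hi).2 fun c hc => hne c ?_
  rw [eq_linearForm_gradAt hj p, ← hc]
  simp [linearForm, Finset.smul_sum, MvPolynomial.smul_eq_C_mul, mul_assoc]

lemma isTransversalArrangement_conicLine (hℓ : ∀ i, (ℓ i).IsHomogeneous 1) (hℓ0 : ∀ i, ℓ i ≠ 0)
    (hℓℓ : ∀ i j, i ≠ j → ∀ c : ℂ, ℓ i ≠ c • ℓ j) (hq : q.IsHomogeneous 2)
    (hqsmooth : ∀ p : Fin 3 → ℂ, (∀ i, eval p (pderiv i q) = 0) → p = 0)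
    (htrans : ∀ p ≠ 0, eval p q = 0 → ∀ i, eval p (ℓ i) = 0 →
      ∀ c : ℂ, ℓ i ≠ c • linearForm (gradAt q p)) :
    IsTransversalArrangement (conicLine q ℓ) (fun o => o.elim 2 fun _ => 1) := by
  have hline (p i) : gradAt (ℓ i) p ≠ 0 := fun h => hℓ0 i <| by
    rw [eq_linearForm_gradAt (hℓ i) p, h]
    simp [linearForm]
  have hconic {p} (hp : p ≠ 0) : gradAt q p ≠ 0 := fun h => hp (hqsmooth p (congrFun h))
  have hmixed {p i} (hp : p ≠ 0) (hq0 : eval p q = 0) (hi : eval p (ℓ i) = 0) :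
      LinearIndepOn ℂ (fun o => gradAt (conicLine q ℓ o) p) {none, some i} :=
    linearIndepOn_pair_gradAt (by simp) (hconic hp) (hℓ i) (htrans p hp hq0 i hi)
  refine ⟨Option.forall.2 ⟨hq, hℓ⟩, fun p hp => ?_⟩
  rintro (_ | i) (_ | j) hi hj
  · simpa [conicLine] using hconic hp
  · exact hmixed hp hi hj
  · exact Set.pair_comm none (some i) ▸ hmixed hp hj hi
  · rcases eq_or_ne i j with rfl | hij
    · simpa [conicLine] using hline p i
    · refine linearIndepOn_pair_gradAt (by simpa) (hline p i) (hℓ j) fun c => ?_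
      exact eq_linearForm_gradAt (hℓ i) p ▸ hℓℓ j i hij.symm c

end ConicLine

/-- If `f` defines a free arrangement of `d ≥ 3` pairwise distinct lines and one smooth conic
in `ℙ²(ℂ)` all of whose singularities are ordinary of multiplicity `< 5` (at every point of
the curve at most 4 of the components pass, and the conic meets each line through a common
point transversally), then `mdr f ∈ {⌈(d-2)/2⌉, ⌊(d+1)/2⌋}`. -/
theorem mdr_of_free_conic_line (d : ℕ) (hd : 3 ≤ d)
    (ℓ : Fin d → MvPolynomial (Fin 3) ℂ)
    (hℓhom : ∀ i, (ℓ i).IsHomogeneous 1)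
    (hℓne : ∀ i, ℓ i ≠ 0)
    (hℓprop : ∀ i j, i ≠ j → ∀ c : ℂ, ℓ i ≠ c • ℓ j)
    (q : MvPolynomial (Fin 3) ℂ) (hqhom : q.IsHomogeneous 2)
    -- smoothness of the conic: the gradient of `q` vanishes only at the origin
    (hqsmooth : ∀ p : Fin 3 → ℂ, (∀ i : Fin 3, eval p (pderiv i q) = 0) → p = 0)
    (f : MvPolynomial (Fin 3) ℂ) (hf : f = q * ∏ i, ℓ i)
    -- every point of the curve lies on at most 4 of the components
    (hmult : ∀ p : Fin 3 → ℂ, p ≠ 0 → eval p f = 0 →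
      ((univ.filter (fun i => eval p (ℓ i) = 0)).card
        + (if eval p q = 0 then 1 else 0)) ≤ 4)
    -- the singularities are ordinary: no line is tangent to the conic at a common point
    (htrans : ∀ p : Fin 3 → ℂ, p ≠ 0 → eval p q = 0 →
      ∀ i, eval p (ℓ i) = 0 →
        ∀ c : ℂ, ℓ i ≠ c • (∑ j : Fin 3, C (eval p (pderiv j q)) * X j))
    -- freeness: the Jacobian ideal is saturated with respect to ⟨x,y,z⟩
    (hfree : ∀ g : MvPolynomial (Fin 3) ℂ,
      (∀ i : Fin 3, X i * g ∈ jacobianIdeal f) → g ∈ jacobianIdeal f) :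
    mdr f = (d - 1) / 2 ∨ mdr f = (d + 1) / 2 := by
  have hQ := isTransversalArrangement_conicLine hℓhom hℓne hℓprop hqhom hqsmooth htrans
  have hN : ∑ o : Option (Fin d), (o.elim 2 fun _ => 1 : ℕ) = d + 2 := by
    simp [Fintype.sum_option, add_comm]
  have hfQ : f = ∏ o, conicLine q ℓ o := hf.trans prod_conicLine.symm
  have hbranches (p : Fin 3 → ℂ) (hp : p ≠ 0) : (branches (conicLine q ℓ) p).card ≤ 4 := by
    by_cases hpf : eval p f = 0
    · exact card_branches_conicLine p ▸ hmult p hp hpf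
    · simp [branches_eq_empty (hfQ ▸ hpf)]
  obtain ⟨hlower, hupper⟩ := mdr_of_free_conic_line_general hQ (by omega) (by norm_num) hbranches
    (hfQ ▸ hfree)
  rw [hN, ← hfQ] at hlower hupper
  omega
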